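/- Let n ≥ 1, q ≥ 2, r ≥ 1 and α > −1, and let μ be a positive Borel measure on 𝔹ₙ. Then the Carleson embedding J_μ : A^1_α → L^q(dμ) is r-summing if and only if J_μ : A^1_α → L^q(dμ) is bounded. -/

import Mathlib

open MeasureTheory Metric Filter Complex
open scoped ENNReal NNReal BigOperators ComplexConjugate

noncomputable section

/-- `ℂⁿ` with the Euclidean norm. -/
abbrev En (n : ℕ) := EuclideanSpace ℂ (Fin n)

instance (n : ℕ) : InnerProductSpace ℝ (En n) := InnerProductSpace.complexToReal
instance (n : ℕ) : MeasurableSpace (En n) := borel _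
instance (n : ℕ) : BorelSpace (En n) := ⟨rfl⟩
instance (n : ℕ) : FiniteDimensional ℝ (En n) := Module.Finite.trans ℂ (En n)

/-- The open unit ball `𝔹ₙ`. -/
def unitBall (n : ℕ) : Set (En n) := Metric.ball 0 1

/-- The Hermitian pairing `⟨z,w⟩ = ∑ zⱼ conj wⱼ`. -/
def herm {n : ℕ} (z w : En n) : ℂ := ∑ j, z j * conj (w j)

/-- Normalized Lebesgue volume measure on `𝔹ₙ` (total mass 1). -/
def vMeas (n : ℕ) : Measure (En n) :=
  (volume (Metric.ball (0 : En n) 1))⁻¹ • volume.restrict (Metric.ball 0 1)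

/-- The normalizing constant `c_α = Γ(n+1+α)/(n!·Γ(α+1))`. -/
def volConst (n : ℕ) (α : ℝ) : ℝ :=
  Real.Gamma (n + 1 + α) / ((n.factorial : ℝ) * Real.Gamma (α + 1))

/-- The weighted measure `dv_α = c_α (1-|z|²)^α dv`. -/
def wMeas (n : ℕ) (α : ℝ) : Measure (En n) :=
  (vMeas n).withDensity fun z => ENNReal.ofReal (volConst n α * (1 - ‖z‖ ^ 2) ^ α)

-- The Möbius involution `φ_z` of `𝔹ₙ` interchanging `z` and `0`, evaluated at `w`.
open scoped Classical in
def mobius {n : ℕ} (z w : En n) : En n :=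
  if z = 0 then -w
  else
    (1 - herm w z)⁻¹ •
      (z - (herm w z / herm z z) • z -
        ((Real.sqrt (1 - ‖z‖ ^ 2) : ℝ) : ℂ) • (w - (herm w z / herm z z) • z))

/-- The Bergman metric on `𝔹ₙ`. -/
def bergmanDist {n : ℕ} (z w : En n) : ℝ :=
  (1 / 2) * Real.log ((1 + ‖mobius z w‖) / (1 - ‖mobius z w‖))

/-- The Bergman metric ball `B(z,r)`. -/
def bergmanBall {n : ℕ} (z : En n) (r : ℝ) : Set (En n) :=
  {w | w ∈ unitBall n ∧ bergmanDist z w < r}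

/-- The Möbius invariant measure `dλ(z) = (1-|z|²)^{-(n+1)} dv(z)`. -/
def invMeas (n : ℕ) : Measure (En n) :=
  (vMeas n).withDensity fun z => ENNReal.ofReal ((1 - ‖z‖ ^ 2) ^ (-(n + 1 : ℝ)))

/-- A sequence in `𝔹ₙ` which is separated (with separation constant `ε`)
in the Bergman metric. -/
def IsSeparated {n : ℕ} (a : ℕ → En n) (ε : ℝ) : Prop :=
  (∀ k, a k ∈ unitBall n) ∧ ∀ i j, i ≠ j → ε ≤ bergmanDist (a i) (a j)

/-- A `δ`-lattice in the Bergman metric. -/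
def IsLattice {n : ℕ} (a : ℕ → En n) (δ : ℝ) : Prop :=
  (∀ k, a k ∈ unitBall n) ∧
    (∀ z ∈ unitBall n, ∃ k, z ∈ bergmanBall (a k) δ) ∧
      ∀ i j, i ≠ j → Disjoint (bergmanBall (a i) (δ / 4)) (bergmanBall (a j) (δ / 4))

/-- `T` satisfies the `(r,s)`-summing inequality with constant `C`. -/
def SummingBoundWith (r s : ℝ) {X Y : Type*} [NormedAddCommGroup X] [NormedSpace ℂ X]
    [NormedAddCommGroup Y] (T : X → Y) (C : ℝ) : Prop :=
  ∀ (m : ℕ) (x : Fin m → X),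
    (∑ k, ‖T (x k)‖ ^ r) ^ (1 / r) ≤
      C * ⨆ φ : {φ : X →L[ℂ] ℂ // ‖φ‖ ≤ 1}, (∑ k, ‖φ.1 (x k)‖ ^ s) ^ (1 / s)

/-- `T` is `(r,s)`-summing. -/
def IsSummingRS (r s : ℝ) {X Y : Type*} [NormedAddCommGroup X] [NormedSpace ℂ X]
    [NormedAddCommGroup Y] (T : X → Y) : Prop :=
  ∃ C, 0 ≤ C ∧ SummingBoundWith r s T C

/-- The `(r,s)`-summing norm `π_{r,s}(T)`. -/
def summingNorm (r s : ℝ) {X Y : Type*} [NormedAddCommGroup X] [NormedSpace ℂ X]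
    [NormedAddCommGroup Y] (T : X → Y) : ℝ :=
  sInf {C | 0 ≤ C ∧ SummingBoundWith r s T C}

/-- The subspace of `Lp` consisting of (a.e. classes of) functions having a representative
holomorphic on `Ω`. -/
def holoSubmodule (n : ℕ) (p : ℝ≥0∞) [Fact (1 ≤ p)] (Ω : Set (En n)) (μ : Measure (En n)) :
    Submodule ℂ (Lp ℂ p μ) where
  carrier := {f | ∃ g : En n → ℂ, DifferentiableOn ℂ g Ω ∧ (f : En n → ℂ) =ᵐ[μ] g}
  zero_mem' := ⟨fun _ => 0, differentiableOn_const 0, Lp.coeFn_zero ℂ p μ⟩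
  add_mem' := by
    rintro f f' ⟨g, hg, hfg⟩ ⟨g', hg', hfg'⟩
    exact ⟨g + g', hg.add hg', (Lp.coeFn_add f f').trans (hfg.add hfg')⟩
  smul_mem' := by
    rintro c f ⟨g, hg, hfg⟩
    exact ⟨c • g, hg.const_smul c, (Lp.coeFn_smul c f).trans (hfg.const_smul c)⟩

/-- The weighted Bergman space `A^p_α` as a subspace of `L^p(dv_α)`. -/
abbrev BergmanSpace (n : ℕ) (p α : ℝ) [Fact (1 ≤ ENNReal.ofReal p)] :=
  ↥(holoSubmodule n (ENNReal.ofReal p) (unitBall n) (wMeas n α))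

/-- The kernel `H_{p,z}(w) = (1-⟨z,w⟩)^{-b}`. -/
def Hker {n : ℕ} (b : ℝ) (z : En n) : En n → ℂ := fun w => (1 - herm z w) ^ (-(b : ℂ))

/-- The `L^p(dv_α)` norm of a function. -/
def lpNormOn (n : ℕ) (p α : ℝ) (g : En n → ℂ) : ℝ :=
  (∫ w, ‖g w‖ ^ p ∂wMeas n α) ^ (1 / p)

/-- The normalized test function `h_{p,z} = H_{p,z}/‖H_{p,z}‖_{p,α}`
(with kernel exponent `b`). -/
def hTest (n : ℕ) (p α b : ℝ) (z : En n) : En n → ℂ := fun w =>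
  Hker b z w / ((lpNormOn n p α (Hker b z) : ℝ) : ℂ)

/-- The `ℓ^s` norm of a sequence of reals, valued in `ℝ≥0∞`. -/
def ellNormE (s : ℝ) (b : ℕ → ℝ) : ℝ≥0∞ := (∑' k, ENNReal.ofReal (b k) ^ s) ^ (1 / s)

/-- The `ℓ^s` norm of a sequence of extended reals. -/
def ellNormE' (s : ℝ) (b : ℕ → ℝ≥0∞) : ℝ≥0∞ := (∑' k, b k ^ s) ^ (1 / s)

/-- The `L^s(𝔹ₙ,dλ)` norm of a nonnegative function, valued in `ℝ≥0∞`. -/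
def lamNormE (n : ℕ) (s : ℝ) (g : En n → ℝ) : ℝ≥0∞ :=
  (∫⁻ z, ENNReal.ofReal (g z) ^ s ∂invMeas n) ^ (1 / s)

/-- The Bergman projection `P_β`. -/
def bergmanProj (n : ℕ) (β : ℝ) (f : En n → ℂ) (z : En n) : ℂ :=
  ∫ w, f w * (1 - herm z w) ^ (-((n : ℂ) + 1 + (β : ℂ))) ∂wMeas n β

/-- The conjugate Bergman projection. -/
def conjBergmanProj (n : ℕ) (β : ℝ) (f : En n → ℂ) (z : En n) : ℂ :=
  ∫ w, f w * (1 - herm w z) ^ (-((n : ℂ) + 1 + (β : ℂ))) ∂wMeas n β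

/-- `g` is bounded and holomorphic on `𝔹ₙ`. -/
def BoundedHolo (n : ℕ) (g : En n → ℂ) : Prop :=
  DifferentiableOn ℂ g (unitBall n) ∧ ∃ M, ∀ z ∈ unitBall n, ‖g z‖ ≤ M

/-- The big Hankel operator `H^β_f(g) = f g - P_β(f g)` at the level of functions. -/
def hankelFun (n : ℕ) (β : ℝ) (f g : En n → ℂ) : En n → ℂ := fun z =>
  f z * g z - bergmanProj n β (fun w => f w * g w) z

/-- The little Hankel operator `h^β_f(g) = conj-P_β(f g)` at the level of functions. -/
def littleHankelFun (n : ℕ) (β : ℝ) (f g : En n → ℂ) : En n → ℂ :=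
  conjBergmanProj n β fun w => f w * g w

/-- `T : A^p_α → L^q(dv_β)` extends the big Hankel operator `H^β_f` from the
bounded holomorphic functions. -/
def ExtendsBigHankel (n : ℕ) (p q α β : ℝ) [Fact (1 ≤ ENNReal.ofReal p)]
    [Fact (1 ≤ ENNReal.ofReal q)] (f : En n → ℂ)
    (T : BergmanSpace n p α → Lp ℂ (ENNReal.ofReal q) (wMeas n β)) : Prop :=
  ∀ g : En n → ℂ, BoundedHolo n g →
    ∀ G : BergmanSpace n p α,
      ((G : Lp ℂ (ENNReal.ofReal p) (wMeas n α)) : En n → ℂ) =ᵐ[wMeas n α] g →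
        (T G : En n → ℂ) =ᵐ[wMeas n β] hankelFun n β f g

/-- `T : A^p_α → L^q(dv_β)` extends the little Hankel operator `h^β_f` from the
bounded holomorphic functions. -/
def ExtendsLittleHankel (n : ℕ) (p q α β : ℝ) [Fact (1 ≤ ENNReal.ofReal p)]
    [Fact (1 ≤ ENNReal.ofReal q)] (f : En n → ℂ)
    (T : BergmanSpace n p α → Lp ℂ (ENNReal.ofReal q) (wMeas n β)) : Prop :=
  ∀ g : En n → ℂ, BoundedHolo n g →
    ∀ G : BergmanSpace n p α,
      ((G : Lp ℂ (ENNReal.ofReal p) (wMeas n α)) : En n → ℂ) =ᵐ[wMeas n α] g →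
        (T G : En n → ℂ) =ᵐ[wMeas n β] littleHankelFun n β f g

/-- `J : A^p_α → L^q(dμ)` represents the Carleson embedding `J_μ f = f`. -/
def RepresentsEmbedding (n : ℕ) (p q α : ℝ) [Fact (1 ≤ ENNReal.ofReal p)]
    [Fact (1 ≤ ENNReal.ofReal q)] (μ : Measure (En n))
    (J : BergmanSpace n p α → Lp ℂ (ENNReal.ofReal q) μ) : Prop :=
  ∀ (G : BergmanSpace n p α) (g : En n → ℂ), DifferentiableOn ℂ g (unitBall n) →
    ((G : Lp ℂ (ENNReal.ofReal p) (wMeas n α)) : En n → ℂ) =ᵐ[wMeas n α] g →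
      (J G : En n → ℂ) =ᵐ[μ] g

/-- The IDA function `G_{q,δ}(f)(z)`. -/
def Gq (n : ℕ) (q δ : ℝ) (f : En n → ℂ) (z : En n) : ℝ :=
  ⨅ h : {h : En n → ℂ // DifferentiableOn ℂ h (bergmanBall z δ)},
    ((vMeas n (bergmanBall z δ)).toReal⁻¹ *
        ∫ w in bergmanBall z δ, ‖f w - h.1 w‖ ^ q ∂vMeas n) ^ (1 / q)

/-- The average of `f` over the Bergman ball `B(z,δ)`. -/
def ballAvg (n : ℕ) (δ : ℝ) (f : En n → ℂ) (z : En n) : ℂ :=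
  ((vMeas n (bergmanBall z δ)).toReal⁻¹ : ℝ) • ∫ w in bergmanBall z δ, f w ∂vMeas n

/-- The local mean oscillation `MO_{q,δ}(f)(z)`. -/
def MOq (n : ℕ) (q δ : ℝ) (f : En n → ℂ) (z : En n) : ℝ :=
  ((vMeas n (bergmanBall z δ)).toReal⁻¹ *
      ∫ w in bergmanBall z δ, ‖f w - ballAvg n δ f z‖ ^ q ∂vMeas n) ^ (1 / q)

/-- The integral operator `V_{b,β}`. -/
def Vop (n : ℕ) (b β : ℝ) (f : En n → ℂ) (z : En n) : ℂ :=
  ((volConst n (b + β) / volConst n β : ℝ) : ℂ) * (((1 - ‖z‖ ^ 2) ^ b : ℝ) : ℂ) *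
    ∫ w, f w * (1 - herm z w) ^ (-((n : ℂ) + 1 + (β : ℂ) + (b : ℂ))) ∂wMeas n β

/-- The norm of the invariant gradient `|∇̃f(z)| = |∇(f ∘ φ_z)(0)|`. -/
def invGradNorm (n : ℕ) (f : En n → ℂ) (z : En n) : ℝ :=
  ‖fderiv ℂ (fun w => f (mobius z w)) 0‖

/-- The Besov space norm `‖f‖_{B^γ_s}`, valued in `ℝ≥0∞`. -/
def besovNorm (n : ℕ) (s γ : ℝ) (f : En n → ℂ) : ℝ≥0∞ :=
  (∫⁻ z, ENNReal.ofReal ((1 - ‖z‖ ^ 2) ^ γ * invGradNorm n f z) ^ s ∂invMeas n) ^ (1 / s)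


instance : Fact ((1 : ℝ≥0∞) ≤ ENNReal.ofReal (1 : ℝ)) := ⟨by simp⟩

/-- The Rademacher sum `∑ ±uᵢ` attached to a choice of signs. -/
def radSum {d : ℕ} (ω : Fin d → Bool) (u : Fin d → ℂ) : ℂ :=
  ∑ i, (if ω i then 1 else -1) * u i

theorem sum_bool_fin_succ {M : Type*} [AddCommMonoid M] {d : ℕ} (F : (Fin (d + 1) → Bool) → M) :
    ∑ ω, F ω = ∑ ω : Fin d → Bool, (F (Fin.cons true ω) + F (Fin.cons false ω)) := by
  rw [← (Fin.consEquiv fun _ : Fin (d + 1) => Bool).sum_comp, Fintype.sum_prod_type]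
  simp [Finset.sum_add_distrib, Fin.consEquiv]

theorem radSum_cons {d : ℕ} (b : Bool) (ω : Fin d → Bool) (u : Fin (d + 1) → ℂ) :
    radSum (Fin.cons b ω) u = (if b then 1 else -1) * u 0 + radSum ω (Fin.tail u) := by
  simp [radSum, Fin.sum_univ_succ, Fin.tail]

theorem sum_radSum_mul {d : ℕ} (u h : Fin d → ℂ) :
    ∑ ω, radSum ω u * radSum ω h = 2 ^ d * ∑ i, u i * h i := by
  induction d with
  | zero => simp [radSum]
  | succ d ih =>
    rw [sum_bool_fin_succ, Fin.sum_univ_succ]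
    have := ih (Fin.tail u) (Fin.tail h)
    simp only [Fin.tail] at this
    calc _ = ∑ ω : Fin d → Bool, (2 * (u 0 * h 0) +
          2 * (radSum ω (Fin.tail u) * radSum ω (Fin.tail h))) := by
            refine Finset.sum_congr rfl fun ω _ => ?_
            simp only [radSum_cons]; simp; ring
      _ = _ := by
            rw [Finset.sum_add_distrib, ← Finset.mul_sum, ← Finset.mul_sum, ← Finset.mul_sum, this]
            simp; ring

theorem radSum_conj {d : ℕ} (ω : Fin d → Bool) (u : Fin d → ℂ) :
    radSum ω (fun i => conj (u i)) = conj (radSum ω u) := by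
  simp only [radSum, map_sum, map_mul]
  refine Finset.sum_congr rfl fun i _ => ?_
  split_ifs <;> simp

theorem sum_norm_radSum_sq {d : ℕ} (u : Fin d → ℂ) :
    ∑ ω, ‖radSum ω u‖ ^ 2 = 2 ^ d * ∑ i, ‖u i‖ ^ 2 := by
  have := sum_radSum_mul u (fun i => conj (u i))
  simp only [radSum_conj, Complex.mul_conj'] at this
  exact_mod_cast this

theorem norm_add_pow_four_add_norm_sub_pow_four_le (a b : ℂ) :
    ‖a + b‖ ^ 4 + ‖-a + b‖ ^ 4 ≤ 2 * ‖a‖ ^ 4 + 12 * (‖a‖ ^ 2 * ‖b‖ ^ 2) + 2 * ‖b‖ ^ 4 := by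
  have e : ∀ x : ℂ, ‖x‖ ^ 4 = (x.re ^ 2 + x.im ^ 2) ^ 2 := fun x => by
    rw [show ‖x‖ ^ 4 = (‖x‖ ^ 2) ^ 2 by ring, Complex.sq_norm, Complex.normSq_apply]; ring
  simp only [e, Complex.sq_norm, Complex.normSq_apply]
  simp
  nlinarith [sq_nonneg (a.re * b.im - a.im * b.re)]

theorem sum_norm_radSum_pow_four_le {d : ℕ} (u : Fin d → ℂ) :
    ∑ ω, ‖radSum ω u‖ ^ 4 ≤ 3 * 2 ^ d * (∑ i, ‖u i‖ ^ 2) ^ 2 := by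
  induction d with
  | zero => simp [radSum]
  | succ d ih =>
    rw [sum_bool_fin_succ, Fin.sum_univ_succ]
    have h2 := sum_norm_radSum_sq (Fin.tail u)
    have h4 := ih (Fin.tail u)
    simp only [Fin.tail] at h2 h4
    set A := ∑ i : Fin d, ‖u i.succ‖ ^ 2
    calc _ ≤ ∑ ω : Fin d → Bool, (2 * ‖u 0‖ ^ 4 +
          12 * (‖u 0‖ ^ 2 * ‖radSum ω (Fin.tail u)‖ ^ 2) + 2 * ‖radSum ω (Fin.tail u)‖ ^ 4) := by
            refine Finset.sum_le_sum fun ω _ => ?_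
            simp only [radSum_cons]
            simpa using norm_add_pow_four_add_norm_sub_pow_four_le (u 0) (radSum ω (Fin.tail u))
      _ = 2 ^ d * (2 * ‖u 0‖ ^ 4) + 12 * (‖u 0‖ ^ 2 * (2 ^ d * A)) +
            2 * ∑ ω, ‖radSum ω (Fin.tail u)‖ ^ 4 := by
            simp only [Finset.sum_add_distrib, ← Finset.mul_sum]
            rw [h2]; simp; ring
      _ ≤ 2 ^ d * (2 * ‖u 0‖ ^ 4) + 12 * (‖u 0‖ ^ 2 * (2 ^ d * A)) +
            2 * (3 * 2 ^ d * A ^ 2) := by gcongr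
      _ ≤ _ := by
            have : (0:ℝ) ≤ 2 ^ d * ‖u 0‖ ^ 4 := by positivity
            rw [pow_succ 2 d]; nlinarith

/-- Truncation of a complex number at level `7`. -/
def trunc (z : ℂ) : ℂ := if ‖z‖ ≤ 7 then z else 0

theorem norm_trunc_le (z : ℂ) : ‖trunc z‖ ≤ 7 := by
  unfold trunc; split_ifs with h
  · exact h
  · simp

theorem norm_trunc_le_norm (z : ℂ) : ‖trunc z‖ ≤ ‖z‖ := by
  unfold trunc; split_ifs <;> simp

theorem norm_sub_trunc_sq_le (z : ℂ) : ‖z - trunc z‖ ^ 2 ≤ ‖z‖ ^ 4 / 49 := by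
  unfold trunc; split_ifs with h
  · simp; positivity
  · push Not at h
    rw [sub_zero, le_div_iff₀ (by norm_num)]
    nlinarith [mul_nonneg (sq_nonneg ‖z‖) (show 0 ≤ ‖z‖ ^ 2 - 49 by nlinarith)]

theorem measurable_trunc : Measurable trunc :=
  Measurable.ite (measurableSet_le measurable_norm measurable_const) measurable_id measurable_const

section Grothendieck

variable {X : Type*} [MeasurableSpace X] {v : Measure X} {m : ℕ} {f : Fin m → X → ℂ}

/-- `C` bounds the bilinear form of `f` on the unit balls of all finite-dimensional Hilbert
spaces. -/
def HilbertBound (v : Measure X) (f : Fin m → X → ℂ) (C : ℝ) : Prop :=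
  ∀ (d : ℕ) (u : Fin d → X → ℂ) (h : Fin m → Fin d → ℂ), (∀ i, Measurable (u i)) →
    (∀ x, ∑ i, ‖u i x‖ ^ 2 ≤ 1) → (∀ k, ∑ i, ‖h k i‖ ^ 2 ≤ 1) →
      ‖∑ k, ∑ i, h k i * ∫ x, f k x * u i x ∂v‖ ≤ C

theorem integrable_mul_of_norm_le_const {g a : X → ℂ} (hg : Integrable g v) (ha : Measurable a)
    {c : ℝ} (hc : ∀ x, ‖a x‖ ≤ c) : Integrable (fun x => g x * a x) v :=
  hg.mul_bdd ha.aestronglyMeasurable (Eventually.of_forall hc)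

theorem HilbertBound.fintype {C : ℝ} (hC : HilbertBound v f C) {ι : Type*} [Fintype ι]
    {s t : ℝ} (hs : 0 < s) (ht : 0 < t)
    (u : ι → X → ℂ) (h : Fin m → ι → ℂ) (hu : ∀ i, Measurable (u i))
    (hu1 : ∀ x, ∑ i, ‖u i x‖ ^ 2 ≤ s ^ 2) (hh : ∀ k, ∑ i, ‖h k i‖ ^ 2 ≤ t ^ 2) :
    ‖∑ k, ∑ i, h k i * ∫ x, f k x * u i x ∂v‖ ≤ s * t * C := by
  let e := (Fintype.equivFin ι).symm
  have key := hC (Fintype.card ι) (fun i x => (s : ℂ)⁻¹ * u (e i) x)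
    (fun k i => (t : ℂ)⁻¹ * h k (e i))
    (fun i => (hu _).const_mul _) (fun x => ?_) (fun k => ?_)
  · have : ∑ k, ∑ i, (t : ℂ)⁻¹ * h k (e i) * ∫ x, f k x * ((s : ℂ)⁻¹ * u (e i) x) ∂v =
        (s * t : ℂ)⁻¹ * ∑ k, ∑ i, h k i * ∫ x, f k x * u i x ∂v := by
      rw [Finset.mul_sum]
      refine Finset.sum_congr rfl fun k _ => ?_
      rw [Finset.mul_sum, ← e.sum_comp]
      refine Finset.sum_congr rfl fun i _ => ?_
      simp_rw [mul_left_comm (f k _)]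
      rw [integral_const_mul, mul_inv]; ring
    rw [this, norm_mul, norm_inv, ← Complex.ofReal_mul, Complex.norm_real, Real.norm_eq_abs,
      abs_of_pos (mul_pos hs ht), inv_mul_le_iff₀ (mul_pos hs ht)] at key
    exact key
  · simp only [norm_mul, norm_inv, mul_pow, ← Finset.mul_sum]
    rw [e.sum_comp fun i => ‖u i x‖ ^ 2, Complex.norm_real, Real.norm_eq_abs,
      abs_of_pos hs, inv_pow, inv_mul_le_iff₀ (by positivity)]
    simpa using hu1 x
  · simp only [norm_mul, norm_inv, mul_pow, ← Finset.mul_sum]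
    rw [e.sum_comp fun i => ‖h k i‖ ^ 2, Complex.norm_real, Real.norm_eq_abs,
      abs_of_pos ht, inv_pow, inv_mul_le_iff₀ (by positivity)]
    simpa using hh k

theorem hilbertBound_sum_norm (hf : ∀ k, Integrable (f k) v) :
    HilbertBound v f (∑ k, ∫ x, ‖f k x‖ ∂v) := by
  intro d u h hu hu1 hh
  have hui : ∀ i x, ‖u i x‖ ≤ 1 := fun i x => by
    have := (Finset.single_le_sum (f := fun i => ‖u i x‖ ^ 2) (fun _ _ => by positivity)
      (Finset.mem_univ i)).trans (hu1 x)
    simpa using this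
  refine (norm_sum_le _ _).trans (Finset.sum_le_sum fun k _ => ?_)
  have hLint : ∀ i, Integrable (fun x => h k i * (f k x * u i x)) v := fun i =>
    (integrable_mul_of_norm_le_const (hf k) (hu i) (hui i)).const_mul _
  simp_rw [← integral_const_mul]
  rw [← integral_finsetSum _ fun i _ => hLint i]
  refine norm_integral_le_of_norm_le (hf k).norm (Eventually.of_forall fun x => ?_)
  calc ‖∑ i, h k i * (f k x * u i x)‖ ≤ ∑ i, ‖f k x‖ * (‖h k i‖ * ‖u i x‖) := by
        refine (norm_sum_le _ _).trans (Finset.sum_le_sum fun i _ => ?_)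
        simp only [norm_mul]; exact le_of_eq (by ring)
    _ = ‖f k x‖ * ∑ i, ‖h k i‖ * ‖u i x‖ := by rw [Finset.mul_sum]
    _ ≤ ‖f k x‖ * 1 := by
        gcongr
        calc ∑ i, ‖h k i‖ * ‖u i x‖ ≤ ∑ i, (‖h k i‖ ^ 2 + ‖u i x‖ ^ 2) / 2 :=
              Finset.sum_le_sum fun i _ => by nlinarith [sq_nonneg (‖h k i‖ - ‖u i x‖)]
          _ ≤ 1 := by
              rw [← Finset.sum_div, Finset.sum_add_distrib]
              linarith [hh k, hu1 x]
    _ = _ := mul_one _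

theorem HilbertBound.improve (hf : ∀ k, Integrable (f k) v) {S C : ℝ}
    (hS : ∀ a : X → ℂ, Measurable a → (∀ x, ‖a x‖ ≤ 1) → ∑ k, ‖∫ x, f k x * a x ∂v‖ ≤ S)
    (hC : HilbertBound v f C) : HilbertBound v f (49 * S + C / 2) := by
  intro d u h hu hu1 hh
  set N : ℝ := 2 ^ d with hN
  have hNpos : 0 < N := by positivity
  have hsN : 0 < √N := Real.sqrt_pos.2 hNpos
  have hui : ∀ i x, ‖u i x‖ ≤ 1 := fun i x => by
    have := (Finset.single_le_sum (f := fun i => ‖u i x‖ ^ 2) (fun _ _ => by positivity)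
      (Finset.mem_univ i)).trans (hu1 x)
    simpa using this
  let U : (Fin d → Bool) → X → ℂ := fun ω x => radSum ω fun i => u i x
  let H : Fin m → (Fin d → Bool) → ℂ := fun k ω => radSum ω (h k)
  have hUm : ∀ ω, Measurable (U ω) := fun ω =>
    Finset.measurable_sum _ fun i _ => (hu i).const_mul _
  have hTm : ∀ ω, Measurable fun x => trunc (U ω x) := fun ω => measurable_trunc.comp (hUm ω)
  have hUd : ∀ ω x, ‖U ω x‖ ≤ d := fun ω x => by
    refine (norm_sum_le _ _).trans ?_
    calc _ ≤ ∑ _i : Fin d, (1 : ℝ) := Finset.sum_le_sum fun i _ => by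
            rw [norm_mul]; split_ifs <;> simpa using hui i x
      _ = d := by simp
  have hTint : ∀ k ω, Integrable (fun x => f k x * trunc (U ω x)) v := fun k ω =>
    integrable_mul_of_norm_le_const (hf k) (hTm ω) fun x => norm_trunc_le _
  have hUint : ∀ k ω, Integrable (fun x => f k x * U ω x) v := fun k ω =>
    integrable_mul_of_norm_le_const (hf k) (hUm ω) fun x => hUd ω x
  have hU2 : ∀ x, ∑ ω, ‖U ω x‖ ^ 2 ≤ √N ^ 2 := fun x => by
    rw [sum_norm_radSum_sq, Real.sq_sqrt hNpos.le]
    nlinarith [hu1 x]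
  have hU4 : ∀ x, ∑ ω, ‖U ω x - trunc (U ω x)‖ ^ 2 ≤ (√N / 4) ^ 2 := fun x => by
    refine (Finset.sum_le_sum fun ω _ => norm_sub_trunc_sq_le _).trans ?_
    rw [← Finset.sum_div, div_pow, Real.sq_sqrt hNpos.le]
    have h1 := sum_norm_radSum_pow_four_le fun i => u i x
    have h2 : (∑ i, ‖u i x‖ ^ 2) ^ 2 ≤ 1 := pow_le_one₀ (by positivity) (hu1 x)
    have h3 : 3 * 2 ^ d * (∑ i, ‖u i x‖ ^ 2) ^ 2 ≤ 3 * N := by rw [← hN]; nlinarith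
    simp only [U]; linarith
  have hH2 : ∀ k, ∑ ω, ‖trunc (H k ω)‖ ^ 2 ≤ √N ^ 2 := fun k => by
    refine (Finset.sum_le_sum fun ω _ =>
      pow_le_pow_left₀ (norm_nonneg _) (norm_trunc_le_norm _) 2).trans ?_
    rw [sum_norm_radSum_sq, Real.sq_sqrt hNpos.le]
    nlinarith [hh k]
  have hH4 : ∀ k, ∑ ω, ‖H k ω - trunc (H k ω)‖ ^ 2 ≤ (√N / 4) ^ 2 := fun k => by
    refine (Finset.sum_le_sum fun ω _ => norm_sub_trunc_sq_le _).trans ?_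
    rw [← Finset.sum_div, div_pow, Real.sq_sqrt hNpos.le]
    have h1 := sum_norm_radSum_pow_four_le (h k)
    have h2 : (∑ i, ‖h k i‖ ^ 2) ^ 2 ≤ 1 := pow_le_one₀ (by positivity) (hh k)
    have h3 : 3 * 2 ^ d * (∑ i, ‖h k i‖ ^ 2) ^ 2 ≤ 3 * N := by rw [← hN]; nlinarith
    simp only [H]; linarith
  have hsplit : (N : ℂ) * ∑ k, ∑ i, h k i * ∫ x, f k x * u i x ∂v =
      ∑ k, ∑ ω, trunc (H k ω) * ∫ x, f k x * trunc (U ω x) ∂v +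
      ∑ k, ∑ ω, trunc (H k ω) * ∫ x, f k x * (U ω x - trunc (U ω x)) ∂v +
      ∑ k, ∑ ω, (H k ω - trunc (H k ω)) * ∫ x, f k x * U ω x ∂v := by
    have e1 : ∀ k, (N : ℂ) * ∑ i, h k i * ∫ x, f k x * u i x ∂v =
        ∑ ω, H k ω * ∫ x, f k x * U ω x ∂v := fun k => by
      have e2 : ∀ ω, ∫ x, f k x * U ω x ∂v = radSum ω fun i => ∫ x, f k x * u i x ∂v := by
        intro ω
        simp only [U, radSum, Finset.mul_sum, mul_left_comm (f k _)]
        rw [integral_finsetSum _ fun i _ => Integrable.const_mul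
          (integrable_mul_of_norm_le_const (hf k) (hu i) (hui i)) _]
        simp only [integral_const_mul]
      simp only [e2, H]
      rw [sum_radSum_mul]; simp [hN]
    rw [Finset.mul_sum, ← Finset.sum_add_distrib, ← Finset.sum_add_distrib]
    refine Finset.sum_congr rfl fun k _ => ?_
    rw [e1, ← Finset.sum_add_distrib, ← Finset.sum_add_distrib]
    refine Finset.sum_congr rfl fun ω _ => ?_
    simp only [mul_sub]
    rw [integral_sub (hUint k ω) (hTint k ω)]
    ring
  have t1 : ‖∑ k, ∑ ω, trunc (H k ω) * ∫ x, f k x * trunc (U ω x) ∂v‖ ≤ N * (49 * S) := by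
    rw [Finset.sum_comm]
    calc _ ≤ ∑ _ω : Fin d → Bool, 49 * S := by
          refine (norm_sum_le _ _).trans (Finset.sum_le_sum fun ω _ => ?_)
          have hS' := hS (fun x => (7 : ℂ)⁻¹ * trunc (U ω x)) ((hTm ω).const_mul _) fun x => by
            rw [norm_mul]
            have := norm_trunc_le (U ω x)
            norm_num; linarith
          simp only [mul_left_comm (f _ _), integral_const_mul, norm_mul, ← Finset.mul_sum] at hS'
          norm_num at hS'
          calc _ ≤ ∑ k, 7 * ‖∫ x, f k x * trunc (U ω x) ∂v‖ := by
                refine (norm_sum_le _ _).trans (Finset.sum_le_sum fun k _ => ?_)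
                rw [norm_mul]; gcongr; exact norm_trunc_le _
            _ ≤ 49 * S := by rw [← Finset.mul_sum]; linarith
      _ = _ := by simp [hN]
  have t2 := hC.fintype (div_pos hsN four_pos) hsN _ (fun k ω => trunc (H k ω))
    (fun ω => (hUm ω).sub (hTm ω)) hU4 hH2
  have t3 := hC.fintype hsN (div_pos hsN four_pos) U (fun k ω => H k ω - trunc (H k ω))
    hUm hU2 hH4
  have hNs : √N * √N = N := Real.mul_self_sqrt hNpos.le
  have : N * ‖∑ k, ∑ i, h k i * ∫ x, f k x * u i x ∂v‖ ≤ N * (49 * S + C / 2) := by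
    calc _ = ‖(N : ℂ) * ∑ k, ∑ i, h k i * ∫ x, f k x * u i x ∂v‖ := by
          rw [norm_mul, Complex.norm_real, Real.norm_eq_abs, abs_of_pos hNpos]
      _ ≤ N * (49 * S) + √N / 4 * √N * C + √N * (√N / 4) * C := by
          rw [hsplit]
          exact norm_add₃_le.trans (add_le_add (add_le_add t1 t2) t3)
      _ = _ := by linear_combination (C / 2) * hNs
  exact le_of_mul_le_mul_left this hNpos

/-- **Grothendieck's inequality**, in the form of a domination of the Hilbert space bound by the
scalar bound. -/
theorem hilbertBound_of_scalar_bound (hf : ∀ k, Integrable (f k) v) {S : ℝ}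
    (hS : ∀ a : X → ℂ, Measurable a → (∀ x, ‖a x‖ ≤ 1) → ∑ k, ‖∫ x, f k x * a x ∂v‖ ≤ S) :
    HilbertBound v f (98 * S) := by
  set C₀ := ∑ k, ∫ x, ‖f k x‖ ∂v
  have iter : ∀ j : ℕ, HilbertBound v f (98 * S + (1 / 2) ^ j * (C₀ - 98 * S)) := by
    intro j
    induction j with
    | zero => simpa [C₀] using hilbertBound_sum_norm hf
    | succ j ih =>
      convert ih.improve hf hS using 1
      rw [pow_succ]; ring
  intro d u h hu hu1 hh
  have hlim : Tendsto (fun j : ℕ => 98 * S + (1 / 2 : ℝ) ^ j * (C₀ - 98 * S)) atTop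
      (nhds (98 * S + 0 * (C₀ - 98 * S))) :=
    ((tendsto_pow_atTop_nhds_zero_of_lt_one (by norm_num) (by norm_num)).mul_const _).const_add _
  rw [zero_mul, add_zero] at hlim
  exact ge_of_tendsto' hlim fun j => iter j d u h hu hu1 hh

end Grothendieck

theorem lintegral_mul_le_sqrt_mul_sqrt {Y : Type*} [MeasurableSpace Y] {ν : Measure Y}
    {a b : Y → ℝ≥0∞} (ha : AEMeasurable a ν) (hb : AEMeasurable b ν) :
    ∫⁻ y, a y * b y ∂ν ≤ (∫⁻ y, a y ^ 2 ∂ν) ^ (1 / 2 : ℝ) * (∫⁻ y, b y ^ 2 ∂ν) ^ (1 / 2 : ℝ) := by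
  simpa using ENNReal.lintegral_mul_le_Lp_mul_Lq ν Real.HolderConjugate.two_two ha hb

theorem eLpNorm_two_sq {Y : Type*} [MeasurableSpace Y] {ν : Measure Y} {g : Y → ℂ} :
    eLpNorm g 2 ν = (∫⁻ y, ‖g y‖ₑ ^ 2 ∂ν) ^ (1 / 2 : ℝ) := by
  simp [eLpNorm_eq_lintegral_rpow_enorm_toReal (p := 2) (by norm_num) (by norm_num)]

theorem eLpNorm_two_kernel_le {X Y : Type*} [MeasurableSpace Y] {ν : Measure Y}
    {κ : X → Y → ℂ} {B : ℝ} (hB0 : 0 ≤ B)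
    (hB : ∀ x, ∫⁻ y, ‖κ x y‖ₑ ^ 2 ∂ν ≤ ENNReal.ofReal (B ^ 2)) (x : X) :
    eLpNorm (κ x) 2 ν ≤ ENNReal.ofReal B := by
  rw [eLpNorm_two_sq]
  refine (ENNReal.rpow_le_rpow (hB x) (by norm_num)).trans ?_
  rw [ENNReal.ofReal_rpow_of_nonneg (by positivity) (by norm_num), ← Real.sqrt_eq_rpow,
    Real.sqrt_sq hB0]

section Kernel

variable {X Y : Type*} [MeasurableSpace X] [MeasurableSpace Y] {v : Measure X} {ν : Measure Y}
  [SFinite v] {κ : X → Y → ℂ} {B : ℝ}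

theorem memLp_two_kernel (hκ : Measurable (Function.uncurry κ))
    (hB : ∀ x, ∫⁻ y, ‖κ x y‖ₑ ^ 2 ∂ν ≤ ENNReal.ofReal (B ^ 2)) (x : X) : MemLp (κ x) 2 ν := by
  have hm : Measurable (κ x) := hκ.comp measurable_prodMk_left
  refine ⟨hm.aestronglyMeasurable, ?_⟩
  rw [eLpNorm_two_sq]
  exact ENNReal.rpow_lt_top_of_nonneg (by norm_num) ((hB x).trans_lt ENNReal.ofReal_lt_top).ne

variable [SFinite ν]

theorem memLp_two_integral_kernel {f : X → ℂ} (hf : Integrable f v)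
    (hκ : Measurable (Function.uncurry κ))
    (hB : ∀ x, ∫⁻ y, ‖κ x y‖ₑ ^ 2 ∂ν ≤ ENNReal.ofReal (B ^ 2)) :
    MemLp (fun y => ∫ x, f x * κ x y ∂v) 2 ν := by
  have hfm : AEMeasurable (fun x => ‖f x‖ₑ) v := hf.1.enorm
  have hfin : ∫⁻ x, ‖f x‖ₑ ∂v < ∞ := hf.2
  have hκ' : ∀ y, Measurable fun x => κ x y := fun y => hκ.comp measurable_prodMk_right
  have hfk : AEStronglyMeasurable (fun p : Y × X => f p.2 * κ p.2 p.1) (ν.prod v) :=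
    (hf.1.comp_snd).mul (hκ.comp measurable_swap).aestronglyMeasurable
  refine ⟨hfk.integral_prod_right', ?_⟩
  rw [eLpNorm_two_sq]
  refine ENNReal.rpow_lt_top_of_nonneg (by norm_num) (ne_of_lt ?_)
  have hpt : ∀ y, ‖∫ x, f x * κ x y ∂v‖ₑ ^ 2 ≤
      (∫⁻ x, ‖f x‖ₑ ∂v) * ∫⁻ x, ‖f x‖ₑ * ‖κ x y‖ₑ ^ 2 ∂v := fun y => by
    have hsq : ∀ t : ℝ≥0∞, (t ^ (1 / 2 : ℝ)) ^ 2 = t := fun t => by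
      rw [← ENNReal.rpow_natCast, ← ENNReal.rpow_mul]; norm_num
    have h1 : ‖∫ x, f x * κ x y ∂v‖ₑ ≤
        ∫⁻ x, ‖f x‖ₑ ^ (1 / 2 : ℝ) * (‖f x‖ₑ ^ (1 / 2 : ℝ) * ‖κ x y‖ₑ) ∂v := by
      refine (enorm_integral_le_lintegral_enorm _).trans (lintegral_mono fun x => ?_)
      rw [← mul_assoc, ← pow_two, hsq, enorm_mul]
    have h2 := h1.trans (lintegral_mul_le_sqrt_mul_sqrt (hfm.pow_const _)
      ((hfm.pow_const _).mul (hκ' y).enorm.aemeasurable))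
    calc _ ≤ _ := pow_le_pow_left₀ zero_le h2 2
      _ = _ := by simp only [mul_pow, hsq]
  calc _ ≤ ∫⁻ y, (∫⁻ x, ‖f x‖ₑ ∂v) * ∫⁻ x, ‖f x‖ₑ * ‖κ x y‖ₑ ^ 2 ∂v ∂ν := lintegral_mono hpt
    _ = (∫⁻ x, ‖f x‖ₑ ∂v) * ∫⁻ x, ∫⁻ y, ‖f x‖ₑ * ‖κ x y‖ₑ ^ 2 ∂ν ∂v := by
        rw [lintegral_const_mul' _ _ hfin.ne, lintegral_lintegral_swap]
        exact (hf.1.enorm.comp_snd).mul ((hκ.comp measurable_swap).enorm.pow_const 2).aemeasurable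
    _ ≤ (∫⁻ x, ‖f x‖ₑ ∂v) * ∫⁻ x, ‖f x‖ₑ * ENNReal.ofReal (B ^ 2) ∂v := by
        gcongr with x
        rw [lintegral_const_mul']
        · gcongr; exact hB x
        · exact enorm_ne_top
    _ < ∞ := by
        rw [lintegral_mul_const' _ _ ENNReal.ofReal_ne_top]
        exact ENNReal.mul_lt_top hfin (ENNReal.mul_lt_top hfin ENNReal.ofReal_lt_top)

theorem integral_conj_mul_integral_kernel {f : X → ℂ} (hf : Integrable f v)
    (hκ : Measurable (Function.uncurry κ)) (hB0 : 0 ≤ B)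
    (hB : ∀ x, ∫⁻ y, ‖κ x y‖ₑ ^ 2 ∂ν ≤ ENNReal.ofReal (B ^ 2)) {e : Y → ℂ}
    (he : MemLp e 2 ν) :
    ∫ y, conj (e y) * ∫ x, f x * κ x y ∂v ∂ν = ∫ x, f x * ∫ y, conj (e y) * κ x y ∂ν ∂v := by
  have hm : AEStronglyMeasurable (fun p : Y × X => conj (e p.1) * (f p.2 * κ p.2 p.1))
      (ν.prod v) :=
    (Complex.continuous_conj.comp_aestronglyMeasurable he.1.comp_fst).mul
      ((hf.1.comp_snd).mul (hκ.comp measurable_swap).aestronglyMeasurable)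
  have hLint : Integrable (Function.uncurry fun y x => conj (e y) * (f x * κ x y)) (ν.prod v) := by
    refine ⟨hm, ?_⟩
    simp only [HasFiniteIntegral, Function.uncurry]
    rw [lintegral_prod_symm _ hm.enorm]
    calc _ ≤ ∫⁻ x, ‖f x‖ₑ * (eLpNorm e 2 ν * ENNReal.ofReal B) ∂v := by
          refine lintegral_mono fun x => ?_
          have : ∀ y, ‖conj (e y) * (f x * κ x y)‖ₑ = ‖f x‖ₑ * (‖e y‖ₑ * ‖κ x y‖ₑ) := fun y => by
            rw [enorm_mul, enorm_mul, show ‖conj (e y)‖ₑ = ‖e y‖ₑ from RCLike.enorm_conj _]; ring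
          simp only [this]
          rw [lintegral_const_mul' _ _ enorm_ne_top]
          gcongr
          have hkm : Measurable (κ x) := hκ.comp measurable_prodMk_left
          refine (lintegral_mul_le_sqrt_mul_sqrt he.1.enorm hkm.enorm.aemeasurable).trans ?_
          rw [← eLpNorm_two_sq, ← eLpNorm_two_sq]
          gcongr
          exact eLpNorm_two_kernel_le hB0 hB x
      _ < ∞ := by
          rw [lintegral_mul_const' _ _ (ENNReal.mul_ne_top he.2.ne ENNReal.ofReal_ne_top)]
          exact ENNReal.mul_lt_top hf.2 (ENNReal.mul_lt_top he.2 ENNReal.ofReal_lt_top)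
  simp only [← integral_const_mul]
  rw [integral_integral_swap hLint]
  refine integral_congr_ae (Eventually.of_forall fun x => ?_)
  simp only [mul_left_comm]

/-- A kernel operator from `L¹` into `L²` is `1`-summing. -/
theorem sum_eLpNorm_two_kernel_le {m : ℕ} {f : Fin m → X → ℂ} (hf : ∀ k, Integrable (f k) v)
    (hκ : Measurable (Function.uncurry κ)) (hB0 : 0 < B)
    (hB : ∀ x, ∫⁻ y, ‖κ x y‖ₑ ^ 2 ∂ν ≤ ENNReal.ofReal (B ^ 2)) {S : ℝ}
    (hS : ∀ a : X → ℂ, Measurable a → (∀ x, ‖a x‖ ≤ 1) → ∑ k, ‖∫ x, f k x * a x ∂v‖ ≤ S) :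
    ∑ k, (eLpNorm (fun y => ∫ x, f k x * κ x y ∂v) 2 ν).toReal ≤ 98 * B * S := by
  have hG := fun k => memLp_two_integral_kernel (hf k) hκ hB
  let G : Fin m → Lp ℂ 2 ν := fun k => (hG k).toLp
  let K : X → Lp ℂ 2 ν := fun x => (memLp_two_kernel hκ hB x).toLp
  have hK : ∀ x, ‖K x‖ ≤ B := fun x => by
    rw [Lp.norm_toLp]
    exact ENNReal.toReal_le_of_le_ofReal hB0.le (eLpNorm_two_kernel_le hB0.le hB x)
  let W : Submodule ℂ (Lp ℂ 2 ν) := Submodule.span ℂ (Set.range G)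
  have hGW : ∀ k, G k ∈ W := fun k => Submodule.subset_span ⟨k, rfl⟩
  have : FiniteDimensional ℂ W := FiniteDimensional.span_of_finite ℂ (Set.finite_range G)
  let b := stdOrthonormalBasis ℂ W
  let e : Fin (Module.finrank ℂ W) → Lp ℂ 2 ν := fun i => (b i : Lp ℂ 2 ν)
  have he : Orthonormal ℂ e := b.orthonormal.comp_linearIsometry W.subtypeₗᵢ
  have hem : ∀ i, MemLp (e i : Y → ℂ) 2 ν := fun i => Lp.memLp _
  let u : Fin (Module.finrank ℂ W) → X → ℂ := fun i x =>
    (B : ℂ)⁻¹ * ∫ y, conj ((e i : Y → ℂ) y) * κ x y ∂ν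
  have hinner : ∀ i x, inner ℂ (e i) (K x) = ∫ y, conj ((e i : Y → ℂ) y) * κ x y ∂ν := by
    intro i x
    rw [L2.inner_def]
    refine integral_congr_ae ?_
    filter_upwards [(memLp_two_kernel hκ hB x).coeFn_toLp] with y hy
    simp only [K, hy, RCLike.inner_apply']
  have hinnerG : ∀ i k, inner ℂ (e i) (G k) = B * ∫ x, f k x * u i x ∂v := by
    intro i k
    have : inner ℂ (e i) (G k) = ∫ y, conj ((e i : Y → ℂ) y) * ∫ x, f k x * κ x y ∂v ∂ν := by
      rw [L2.inner_def]
      refine integral_congr_ae ?_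
      filter_upwards [(hG k).coeFn_toLp] with y hy
      simp only [G, hy, RCLike.inner_apply']
    rw [this, integral_conj_mul_integral_kernel (hf k) hκ hB0.le hB (hem i),
      ← integral_const_mul]
    refine integral_congr_ae (Eventually.of_forall fun x => ?_)
    have : (B : ℂ) ≠ 0 := by exact_mod_cast hB0.ne'
    simp only [u]; field_simp
  let h : Fin m → Fin (Module.finrank ℂ W) → ℂ := fun k i =>
    (‖G k‖ : ℂ)⁻¹ * inner ℂ (G k) (e i)
  have hum : ∀ i, Measurable (u i) := fun i => by
    refine Measurable.const_mul ?_ _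
    have h1 : StronglyMeasurable (Function.uncurry fun (x : X) (y : Y) =>
        conj ((e i : Y → ℂ) y) * κ x y) :=
      (Complex.continuous_conj.comp_stronglyMeasurable
        ((Lp.stronglyMeasurable (e i)).comp_measurable measurable_snd)).mul hκ.stronglyMeasurable
    exact h1.integral_prod_right.measurable
  have hu1 : ∀ x, ∑ i, ‖u i x‖ ^ 2 ≤ 1 := fun x => by
    have h1 := he.sum_inner_products_le (K x) (s := Finset.univ)
    simp only [hinner] at h1
    simp only [u, norm_mul, norm_inv, mul_pow, ← Finset.mul_sum, Complex.norm_real,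
      Real.norm_eq_abs, abs_of_pos hB0]
    rw [inv_pow, inv_mul_le_iff₀ (by positivity), mul_one]
    exact h1.trans (pow_le_pow_left₀ (norm_nonneg _) (hK x) 2)
  have hh1 : ∀ k, ∑ i, ‖h k i‖ ^ 2 ≤ 1 := fun k => by
    have h1 := he.sum_inner_products_le (G k) (s := Finset.univ)
    simp only [h, norm_mul, norm_inv, mul_pow, ← Finset.mul_sum, Complex.norm_real, norm_norm]
    rcases eq_or_ne ‖G k‖ 0 with h0 | h0
    · simp [h0]
    · rw [inv_pow, inv_mul_le_iff₀ (by positivity), mul_one]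
      simpa only [norm_inner_symm (G k)] using h1
  have key := hilbertBound_of_scalar_bound hf hS _ u h hum hu1 hh1
  have hsum : ∀ k, ∑ i, h k i * ∫ x, f k x * u i x ∂v = (B : ℂ)⁻¹ * ‖G k‖ := fun k => by
    have hBc : (B : ℂ) ≠ 0 := by exact_mod_cast hB0.ne'
    have h1 : ∑ i, inner ℂ (G k) (e i) * inner ℂ (e i) (G k) = inner ℂ (G k) (G k) :=
      b.sum_inner_mul_inner ⟨G k, hGW k⟩ ⟨G k, hGW k⟩
    rw [inner_self_eq_norm_sq_to_K] at h1
    have h2 : ∀ i, h k i * ∫ x, f k x * u i x ∂v =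
        ((B : ℂ)⁻¹ * (‖G k‖ : ℂ)⁻¹) * (inner ℂ (G k) (e i) * inner ℂ (e i) (G k)) := fun i => by
      rw [hinnerG]; simp only [h]; field_simp
    rw [Finset.sum_congr rfl fun i _ => h2 i, ← Finset.mul_sum, h1]
    rcases eq_or_ne ‖G k‖ 0 with h0 | h0
    · simp [h0]
    · have : (‖G k‖ : ℂ) ≠ 0 := by exact_mod_cast h0
      simp only [Complex.coe_algebraMap]; field_simp
  simp only [hsum] at key
  rw [← Finset.mul_sum, ← Complex.ofReal_sum, ← Complex.ofReal_inv, ← Complex.ofReal_mul,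
    Complex.norm_real, Real.norm_of_nonneg (by positivity), inv_mul_le_iff₀ hB0] at key
  calc _ = ∑ k, ‖G k‖ := by simp only [G, Lp.norm_toLp]
    _ ≤ _ := key
    _ = _ := by ring

end Kernel

section Geometry

variable {n : ℕ}

/-- The anisotropic neighbourhood of the origin attached to `w`: complex-radial displacements of
size `c (1-|w|²)`, arbitrary displacements of size `(c (1-|w|²))^{1/2}`. -/
def aniso (c : ℝ) (w : En n) : Set (En n) :=
  {η | ‖inner ℂ w η‖ < c * (1 - ‖w‖ ^ 2) ∧ ‖η‖ ^ 2 < c * (1 - ‖w‖ ^ 2)}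

/-- The linear map carrying a Euclidean ball to an anisotropic neighbourhood attached to `w`. -/
def anisoMap (w : En n) : En n →ₗ[ℂ] En n :=
  ((Real.sqrt (1 - ‖w‖ ^ 2) : ℝ) : ℂ) •
    LinearMap.transvection
      ((-(1 + (Real.sqrt (1 - ‖w‖ ^ 2) : ℂ))⁻¹) • (innerSL ℂ w).toLinearMap) w

lemma anisoMap_apply (w η : En n) :
    anisoMap w η = ((Real.sqrt (1 - ‖w‖ ^ 2) : ℝ) : ℂ) •
      (η - ((1 + (Real.sqrt (1 - ‖w‖ ^ 2) : ℂ))⁻¹ * inner ℂ w η) • w) := by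
  simp [anisoMap, LinearMap.transvection.apply, sub_eq_add_neg]

lemma one_sub_normSq_pos {w : En n} (hw : w ∈ ball (0 : En n) 1) : 0 < 1 - ‖w‖ ^ 2 := by
  have : ‖w‖ < 1 := by simpa using hw
  nlinarith [norm_nonneg w]

lemma inner_self_eq_ofReal (w : En n) : inner ℂ w w = ((‖w‖ ^ 2 : ℝ) : ℂ) := by
  rw [inner_self_eq_norm_sq_to_K]; simp

lemma det_anisoMap {w : En n} (hw : w ∈ ball (0 : En n) 1) :
    LinearMap.det (anisoMap w) = ((Real.sqrt (1 - ‖w‖ ^ 2) ^ (n + 1) : ℝ) : ℂ) := by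
  have hd := one_sub_normSq_pos hw
  set s := Real.sqrt (1 - ‖w‖ ^ 2) with hs
  have hs0 : 0 < s := Real.sqrt_pos.2 hd
  have hs2 : s ^ 2 = 1 - ‖w‖ ^ 2 := Real.sq_sqrt hd.le
  have h1 : (1 + (s : ℂ)) ≠ 0 := by
    have : (1 + s) ≠ 0 := by positivity
    exact_mod_cast this
  have hw2 : (inner ℂ w w : ℂ) = 1 - (s : ℂ) ^ 2 := by
    rw [inner_self_eq_ofReal, ← ofReal_pow, hs2]; push_cast; ring
  unfold anisoMap
  rw [LinearMap.det_smul, LinearMap.transvection.det]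
  simp only [LinearMap.smul_apply, ← hs]
  have : ((innerSL ℂ w).toLinearMap w) = 1 - (s : ℂ) ^ 2 := by
    simpa using hw2
  rw [this]
  simp only [finrank_euclideanSpace, Fintype.card_fin, smul_eq_mul]
  push_cast
  field_simp
  ring

lemma volume_image_anisoMap {w : En n} (hw : w ∈ ball (0 : En n) 1) (S : Set (En n)) :
    volume (anisoMap w '' S) = ENNReal.ofReal ((1 - ‖w‖ ^ 2) ^ (n + 1)) * volume S := by
  have h := Measure.addHaar_image_linearMap (volume : Measure (En n))
    ((anisoMap w).restrictScalars ℝ) S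
  have hdet : LinearMap.det ((anisoMap w).restrictScalars ℝ) = (1 - ‖w‖ ^ 2) ^ (n + 1) := by
    rw [LinearMap.det_restrictScalars, det_anisoMap hw, Algebra.norm_complex_apply, normSq_ofReal,
      ← mul_pow, Real.mul_self_sqrt (one_sub_normSq_pos hw).le]
  rw [hdet, abs_of_nonneg (pow_nonneg (one_sub_normSq_pos hw).le _)] at h
  exact h

lemma aniso_subset_image {c : ℝ} (hc : 0 ≤ c) {w : En n} (hw : w ∈ ball (0 : En n) 1) :
    aniso c w ⊆ anisoMap w '' ball 0 (Real.sqrt c + c) := by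
  intro η hη
  have hd := one_sub_normSq_pos hw
  have hw1 : ‖w‖ < 1 := by simpa using hw
  obtain ⟨h1, h2⟩ := hη
  have hc0 : 0 < c := by
    rcases hc.eq_or_lt with h | h
    · subst h; simp at h2; nlinarith [norm_nonneg η]
    · exact h
  set s := Real.sqrt (1 - ‖w‖ ^ 2) with hs
  have hs0 : 0 < s := Real.sqrt_pos.2 hd
  have hs2 : s ^ 2 = 1 - ‖w‖ ^ 2 := Real.sq_sqrt hd.le
  have hsC : (s : ℂ) ≠ 0 := by exact_mod_cast hs0.ne'
  have hsC1 : (1 + (s : ℂ)) ≠ 0 := by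
    have : (1 + s) ≠ 0 := by positivity
    exact_mod_cast this
  have hw2 : (inner ℂ w w : ℂ) = 1 - (s : ℂ) ^ 2 := by
    rw [inner_self_eq_ofReal, ← ofReal_pow, hs2]; push_cast; ring
  refine ⟨(s : ℂ)⁻¹ • (η + ((s * (1 + (s : ℂ)))⁻¹ * inner ℂ w η) • w), ?_, ?_⟩
  · rw [mem_ball_zero_iff, norm_smul, norm_inv, norm_real, Real.norm_of_nonneg hs0.le,
      inv_mul_lt_iff₀ hs0]
    refine (norm_add_le _ _).trans_lt ?_
    have hη : ‖η‖ < s * Real.sqrt c := by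
      rw [hs, ← Real.sqrt_mul hd.le, mul_comm]
      exact Real.lt_sqrt_of_sq_lt h2
    have h3 : ‖((s * (1 + (s : ℂ)))⁻¹ * inner ℂ w η) • w‖ ≤ s * c := by
      rw [norm_smul, norm_mul, norm_inv, norm_mul, norm_real, Real.norm_of_nonneg hs0.le]
      have h4 : ‖(1 + (s : ℂ))‖ = 1 + s := by
        rw [← ofReal_one, ← ofReal_add, norm_real, Real.norm_of_nonneg (by positivity)]
      rw [h4]
      have h5 : (s * (1 + s))⁻¹ * ‖inner ℂ w η‖ ≤ s * c := by
        rw [inv_mul_le_iff₀ (by positivity)]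
        rw [← hs2] at h1
        nlinarith [mul_pos (pow_pos hs0 3) hc0]
      calc _ ≤ (s * (1 + s))⁻¹ * ‖inner ℂ w η‖ * 1 := by gcongr
        _ ≤ _ := by simpa using h5
    linarith
  · rw [anisoMap_apply, ← hs]
    simp only [inner_smul_right, inner_add_right, hw2]
    match_scalars
    · field_simp
    · field_simp
      ring

lemma image_subset_aniso {c : ℝ} (hc : 0 < c) (hc1 : c ≤ 1) {w : En n}
    (hw : w ∈ ball (0 : En n) 1) :
    anisoMap w '' ball 0 (c / 4) ⊆ aniso c w := by
  rintro _ ⟨ξ, hξ, rfl⟩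
  have hd := one_sub_normSq_pos hw
  have hw1 : ‖w‖ < 1 := by simpa using hw
  have hξ1 : ‖ξ‖ < c / 4 := by simpa using hξ
  set s := Real.sqrt (1 - ‖w‖ ^ 2) with hs
  have hs0 : 0 < s := Real.sqrt_pos.2 hd
  have hs2 : s ^ 2 = 1 - ‖w‖ ^ 2 := Real.sq_sqrt hd.le
  have hsC1 : (1 + (s : ℂ)) ≠ 0 := by
    have : (1 + s) ≠ 0 := by positivity
    exact_mod_cast this
  have hw2 : (inner ℂ w w : ℂ) = 1 - (s : ℂ) ^ 2 := by
    rw [inner_self_eq_ofReal, ← ofReal_pow, hs2]; push_cast; ring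
  have hin : ‖(inner ℂ w ξ : ℂ)‖ ≤ ‖ξ‖ := by
    refine (norm_inner_le_norm w ξ).trans ?_
    nlinarith [norm_nonneg ξ]
  constructor
  · have : (inner ℂ w (anisoMap w ξ) : ℂ) = ((s ^ 2 : ℝ) : ℂ) * inner ℂ w ξ := by
      rw [anisoMap_apply, ← hs, inner_smul_right, inner_sub_right, inner_smul_right, hw2]
      push_cast
      field_simp
      ring
    rw [this, norm_mul, norm_real, Real.norm_of_nonneg (by positivity), hs2]
    nlinarith
  · have h1 : ‖anisoMap w ξ‖ ≤ s * (2 * ‖ξ‖) := by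
      rw [anisoMap_apply, ← hs, norm_smul, norm_real, Real.norm_of_nonneg hs0.le]
      gcongr
      refine (norm_sub_le _ _).trans ?_
      have h4 : ‖(1 + (s : ℂ))‖ = 1 + s := by
        rw [← ofReal_one, ← ofReal_add, norm_real, Real.norm_of_nonneg (by positivity)]
      have : ‖((1 + (s : ℂ))⁻¹ * inner ℂ w ξ) • w‖ ≤ ‖ξ‖ := by
        rw [norm_smul, norm_mul, norm_inv, h4]
        have h6 : (1 + s)⁻¹ ≤ 1 := inv_le_one_of_one_le₀ (by linarith)
        calc _ ≤ 1 * ‖ξ‖ * 1 := by gcongr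
          _ = _ := by ring
      linarith
    rw [← hs2]
    calc ‖anisoMap w ξ‖ ^ 2 ≤ (s * (2 * ‖ξ‖)) ^ 2 := by gcongr
      _ = 4 * ‖ξ‖ ^ 2 * s ^ 2 := by ring
      _ < c * s ^ 2 := by
        gcongr
        nlinarith [norm_nonneg ξ]

lemma volume_aniso_le {c : ℝ} (hc : 0 ≤ c) {w : En n} (hw : w ∈ ball (0 : En n) 1) :
    volume (aniso c w) ≤ ENNReal.ofReal ((1 - ‖w‖ ^ 2) ^ (n + 1)) *
      volume (ball (0 : En n) (Real.sqrt c + c)) :=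
  (measure_mono (aniso_subset_image hc hw)).trans_eq (volume_image_anisoMap hw _)

lemma le_volume_aniso {c : ℝ} (hc : 0 < c) (hc1 : c ≤ 1) {w : En n}
    (hw : w ∈ ball (0 : En n) 1) :
    ENNReal.ofReal ((1 - ‖w‖ ^ 2) ^ (n + 1)) * volume (ball (0 : En n) (c / 4)) ≤
      volume (aniso c w) :=
  (volume_image_anisoMap hw _).symm.trans_le (measure_mono (image_subset_aniso hc hc1 hw))

end Geometry

section MeanValue

variable {n : ℕ}

/-- The anisotropic ball centred at `w`, comparable to a Bergman metric ball of fixed radius. -/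
def anisoBall (w : En n) : Set (En n) := {z | z - w ∈ aniso (1 / 8) w}

lemma isOpen_aniso (c : ℝ) (w : En n) : IsOpen (aniso c w) := by
  apply IsOpen.inter
  · exact isOpen_lt (by fun_prop : Continuous fun η : En n => ‖(inner ℂ w η : ℂ)‖) continuous_const
  · exact isOpen_lt (by fun_prop : Continuous fun η : En n => ‖η‖ ^ 2) continuous_const

lemma isOpen_anisoBall (w : En n) : IsOpen (anisoBall w) :=
  (isOpen_aniso _ w).preimage (by fun_prop : Continuous fun z : En n => z - w)

lemma volume_anisoBall (w : En n) : volume (anisoBall w) = volume (aniso (1 / 8) w) := by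
  have := measure_preimage_add_right volume (-w) (aniso (1 / 8) w)
  simp only [← sub_eq_add_neg] at this
  exact this

lemma normSq_add_eq (w η : En n) :
    ‖w + η‖ ^ 2 = ‖w‖ ^ 2 + 2 * (inner ℂ w η : ℂ).re + ‖η‖ ^ 2 :=
  norm_add_sq (𝕜 := ℂ) w η

lemma le_one_sub_normSq_add {c : ℝ} {w η : En n} (h1 : ‖(inner ℂ w η : ℂ)‖ ≤ c * (1 - ‖w‖ ^ 2))
    (h2 : ‖η‖ ^ 2 ≤ c * (1 - ‖w‖ ^ 2)) :
    (1 - 3 * c) * (1 - ‖w‖ ^ 2) ≤ 1 - ‖w + η‖ ^ 2 := by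
  have := normSq_add_eq w η
  have := (re_le_norm (inner ℂ w η : ℂ)).trans h1
  nlinarith

lemma one_sub_normSq_add_le {c : ℝ} {w η : En n}
    (h1 : ‖(inner ℂ w η : ℂ)‖ ≤ c * (1 - ‖w‖ ^ 2)) :
    1 - ‖w + η‖ ^ 2 ≤ (1 + 2 * c) * (1 - ‖w‖ ^ 2) := by
  have := normSq_add_eq w η
  have := (neg_le_of_abs_le ((abs_re_le_norm (inner ℂ w η : ℂ)).trans h1))
  nlinarith [sq_nonneg ‖η‖]

lemma mem_ball_of_one_sub_normSq_pos {z : En n} (h : 0 < 1 - ‖z‖ ^ 2) : z ∈ ball (0 : En n) 1 := by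
  rw [mem_ball_zero_iff]
  nlinarith [norm_nonneg z]

lemma anisoBall_bounds {w z : En n} (hz : z ∈ anisoBall w) :
    5 / 8 * (1 - ‖w‖ ^ 2) ≤ 1 - ‖z‖ ^ 2 ∧ 1 - ‖z‖ ^ 2 ≤ 5 / 4 * (1 - ‖w‖ ^ 2) := by
  have h1 := le_one_sub_normSq_add hz.1.le hz.2.le
  have h2 := one_sub_normSq_add_le hz.1.le
  rw [add_sub_cancel] at h1 h2
  constructor <;> linarith

lemma mem_ball_of_mem_anisoBall {w z : En n} (hw : w ∈ ball (0 : En n) 1) (hz : z ∈ anisoBall w) :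
    z ∈ ball (0 : En n) 1 :=
  mem_ball_of_one_sub_normSq_pos
    ((mul_pos (by norm_num) (one_sub_normSq_pos hw)).trans_le (anisoBall_bounds hz).1)

lemma norm_one_sub_inner_le {w z : En n} (hw : w ∈ ball (0 : En n) 1) (hz : z ∈ anisoBall w) :
    ‖1 - (inner ℂ w z : ℂ)‖ ≤ 9 / 8 * (1 - ‖w‖ ^ 2) := by
  have h : 1 - (inner ℂ w z : ℂ) = ((1 - ‖w‖ ^ 2 : ℝ) : ℂ) - inner ℂ w (z - w) := by
    rw [inner_sub_right, inner_self_eq_ofReal]; push_cast; ring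
  rw [h]
  refine (norm_sub_le _ _).trans ?_
  rw [norm_real, Real.norm_of_nonneg (one_sub_normSq_pos hw).le]
  have := hz.1.le
  linarith

lemma sub_mem_aniso_of_mem_anisoBall {w z : En n} (hz : z ∈ anisoBall w) :
    w - z ∈ aniso (2 / 5) z := by
  have hb := (anisoBall_bounds hz).1
  have h1 := hz.1
  have h2 := hz.2
  constructor
  · have : (inner ℂ z (w - z) : ℂ) = -(inner ℂ w (z - w) + inner ℂ (z - w) (z - w)) := by
      rw [← inner_add_left, add_sub_cancel, ← inner_neg_right, neg_sub]
    rw [this, norm_neg]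
    refine (norm_add_le _ _).trans_lt ?_
    rw [inner_self_eq_ofReal, norm_real, Real.norm_of_nonneg (by positivity)]
    linarith
  · rw [norm_sub_rev]
    nlinarith [norm_nonneg (z - w)]

/-- Multiplication by a unimodular scalar preserves volume on `ℂⁿ`. -/
lemma integral_smul_circle {F : Type*} [NormedAddCommGroup F] [NormedSpace ℝ F] {a : ℂ}
    (ha : ‖a‖ = 1) (g : En n → F) : ∫ η : En n, g (a • η) = ∫ η, g η := by
  have ha0 : a ≠ 0 := by
    rintro rfl; simp at ha
  let e : En n ≃ₗᵢ[ℝ] En n :=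
    { (LinearEquiv.smulOfNeZero ℂ (En n) a ha0).restrictScalars ℝ with
      norm_map' := fun x => by
        simp [norm_smul, ha] }
  exact (e.measurePreserving).integral_comp e.toHomeomorph.measurableEmbedding g

lemma smul_mem_aniso {c : ℝ} {w η : En n} (hη : η ∈ aniso c w) {a : ℂ} (ha : ‖a‖ ≤ 1) :
    a • η ∈ aniso c w := by
  refine ⟨lt_of_le_of_lt ?_ hη.1, lt_of_le_of_lt ?_ hη.2⟩
  · rw [inner_smul_right, norm_mul]
    exact mul_le_of_le_one_left (norm_nonneg _) ha
  · rw [norm_smul]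
    gcongr
    exact mul_le_of_le_one_left (norm_nonneg _) ha

lemma smul_mem_aniso_iff {c : ℝ} {w η : En n} {a : ℂ} (ha : ‖a‖ = 1) :
    a • η ∈ aniso c w ↔ η ∈ aniso c w := by
  refine ⟨fun h => ?_, fun h => smul_mem_aniso h ha.le⟩
  have ha0 : a ≠ 0 := by
    rintro rfl; simp at ha
  have := smul_mem_aniso h (a := a⁻¹) (by simp [ha])
  rwa [smul_smul, inv_mul_cancel₀ ha0, one_smul] at this

lemma exists_bound_anisoBall {w : En n} (hw : w ∈ ball (0 : En n) 1) {f : En n → ℂ}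
    (hf : ContinuousOn f (ball 0 1)) : ∃ M, ∀ z ∈ anisoBall w, ‖f z‖ ≤ M := by
  have hd := one_sub_normSq_pos hw
  let K : Set (En n) := {z | ‖(inner ℂ w (z - w) : ℂ)‖ ≤ 1 / 8 * (1 - ‖w‖ ^ 2) ∧
    ‖z - w‖ ^ 2 ≤ 1 / 8 * (1 - ‖w‖ ^ 2)}
  have hK : IsCompact K := by
    apply Metric.isCompact_of_isClosed_isBounded
    · exact (isClosed_le (by fun_prop : Continuous fun z : En n => ‖(inner ℂ w (z - w) : ℂ)‖)
        continuous_const).inter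
        (isClosed_le (by fun_prop : Continuous fun z : En n => ‖z - w‖ ^ 2) continuous_const)
    · refine (isBounded_closedBall (x := w) (r := 1)).subset fun z hz => ?_
      rw [mem_closedBall, dist_eq_norm]
      have := hz.2
      nlinarith [norm_nonneg (z - w), sq_nonneg ‖w‖]
  have hKb : K ⊆ ball 0 1 := fun z hz => by
    have h := le_one_sub_normSq_add hz.1 hz.2
    rw [add_sub_cancel] at h
    exact mem_ball_of_one_sub_normSq_pos (lt_of_lt_of_le (by nlinarith) h)
  obtain ⟨M, hM⟩ := hK.exists_bound_of_continuousOn (hf.mono hKb)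
  exact ⟨M, fun z hz => hM z ⟨hz.1.le, hz.2.le⟩⟩

lemma volume_anisoBall_lt_top {w : En n} (hw : w ∈ ball (0 : En n) 1) :
    volume (anisoBall w) < ∞ :=
  (measure_mono fun _ hz => mem_ball_of_mem_anisoBall hw hz).trans_lt measure_ball_lt_top

/-- Mean value property of holomorphic functions on anisotropic balls. -/
lemma setIntegral_anisoBall {w : En n} (hw : w ∈ ball (0 : En n) 1) {f : En n → ℂ}
    (hf : DifferentiableOn ℂ f (ball 0 1)) :
    ∫ z in anisoBall w, f z = (volume (anisoBall w)).toReal * f w := by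
  obtain ⟨M, hM⟩ := exists_bound_anisoBall hw hf.continuousOn
  set S : Set (En n) := aniso (1 / 8) w with hS
  have hSm : MeasurableSet S := (isOpen_aniso _ w).measurableSet
  have hmem : ∀ η ∈ S, w + η ∈ anisoBall w := fun η hη => by
    change w + η - w ∈ S
    rwa [add_sub_cancel_left]
  have hvS : volume S < ∞ := volume_anisoBall w ▸ volume_anisoBall_lt_top hw
  have hshift : ∫ z in anisoBall w, f z = ∫ η in S, f (w + η) := by
    rw [← integral_indicator (isOpen_anisoBall w).measurableSet, ← integral_indicator hSm,
      ← integral_add_left_eq_self _ w]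
    congr 1
    ext η
    by_cases hη : η ∈ S
    · rw [Set.indicator_of_mem hη, Set.indicator_of_mem (hmem η hη)]
    · rw [Set.indicator_of_notMem hη, Set.indicator_of_notMem]
      intro h
      apply hη
      have : w + η - w ∈ S := h
      rwa [add_sub_cancel_left] at this
  set I := ∫ η in S, f (w + η) with hI
  have hrot : ∀ θ : ℝ, ∫ η in S, f (w + circleMap 0 1 θ • η) = I := by
    intro θ
    have ha : ‖circleMap 0 1 θ‖ = 1 := by simp
    rw [hI, ← integral_indicator hSm, ← integral_indicator hSm,
      ← integral_smul_circle ha (S.indicator fun η => f (w + η))]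
    congr 1
    ext η
    by_cases hη : η ∈ S
    · rw [Set.indicator_of_mem hη, Set.indicator_of_mem ((smul_mem_aniso_iff ha).2 hη)]
    · rw [Set.indicator_of_notMem hη,
        Set.indicator_of_notMem (fun h => hη ((smul_mem_aniso_iff ha).1 h))]
  have hcirc : ∀ η ∈ S, ∫ θ in (0)..(2 * Real.pi), f (w + circleMap 0 1 θ • η) =
      (2 * Real.pi : ℝ) • f w := by
    intro η hη
    have hd : DifferentiableOn ℂ (fun a : ℂ => f (w + a • η)) (closedBall 0 1) := by
      refine hf.comp (by fun_prop) fun a ha => ?_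
      exact mem_ball_of_mem_anisoBall hw (hmem _ (smul_mem_aniso hη (by simpa using ha)))
    have hdc : DiffContOnCl ℂ (fun a : ℂ => f (w + a • η)) (ball 0 |1|) := by
      rw [abs_one]
      refine ⟨hd.mono ball_subset_closedBall, ?_⟩
      rw [closure_ball _ one_ne_zero]
      exact hd.continuousOn
    have := hdc.circleAverage
    rw [Real.circleAverage, inv_smul_eq_iff₀ (by positivity)] at this
    simpa using this
  have hLint : Integrable (Function.uncurry fun (θ : ℝ) (η : En n) => f (w + circleMap 0 1 θ • η))
      ((volume.restrict (Set.Ioc 0 (2 * Real.pi))).prod (volume.restrict S)) := by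
    rw [Measure.prod_restrict]
    have hcont : ContinuousOn
        (Function.uncurry fun (θ : ℝ) (η : En n) => f (w + circleMap 0 1 θ • η))
        (Set.Ioc 0 (2 * Real.pi) ×ˢ S) := by
      have hc : Continuous fun p : ℝ × En n => w + circleMap 0 1 p.1 • p.2 := by
        have := continuous_circleMap 0 1
        fun_prop
      refine hf.continuousOn.comp hc.continuousOn fun p hp => ?_
      exact mem_ball_of_mem_anisoBall hw (hmem _ (smul_mem_aniso hp.2 (by simp)))
    have hmeas : MeasurableSet (Set.Ioc 0 (2 * Real.pi) ×ˢ S) := measurableSet_Ioc.prod hSm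
    refine IntegrableOn.of_bound ?_ (hcont.aestronglyMeasurable hmeas) M
      (ae_restrict_of_forall_mem hmeas fun p hp => ?_)
    · rw [Measure.prod_prod]
      exact ENNReal.mul_lt_top measure_Ioc_lt_top hvS
    · exact hM _ (hmem _ (smul_mem_aniso hp.2 (by simp)))
  have hswap := integral_integral_swap hLint
  simp only [hrot] at hswap
  have hR : ∫ η in S, (∫ θ in Set.Ioc 0 (2 * Real.pi), f (w + circleMap 0 1 θ • η)) =
      ∫ η in S, (2 * Real.pi : ℝ) • f w := by
    refine setIntegral_congr_fun hSm fun η hη => ?_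
    rw [← hcirc η hη, intervalIntegral.integral_of_le (by positivity)]
  rw [hR] at hswap
  simp only [integral_const, MeasurableSet.univ, measureReal_restrict_apply, Set.univ_inter,
    Real.volume_real_Ioc, sub_zero] at hswap
  rw [max_eq_left (by positivity), smul_comm] at hswap
  have hpi : (2 * Real.pi : ℝ) ≠ 0 := by positivity
  have := smul_right_injective ℂ hpi hswap
  rw [hshift, this, volume_anisoBall]
  simp [Measure.real, hS]

end MeanValue

section KernelVolume

variable {n : ℕ}

lemma one_sub_norm_le_norm_one_sub_inner {a w : En n} (hw : ‖w‖ ≤ 1) :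
    1 - ‖a‖ ≤ ‖1 - (inner ℂ a w : ℂ)‖ := by
  have h1 : ‖(inner ℂ a w : ℂ)‖ ≤ ‖a‖ :=
    (norm_inner_le_norm a w).trans (mul_le_of_le_one_right (norm_nonneg _) hw)
  have h2 := norm_sub_norm_le (1 : ℂ) (inner ℂ a w)
  rw [norm_one] at h2
  linarith

lemma one_sub_norm_le_norm_one_sub_inner' {a w : En n} (ha : ‖a‖ ≤ 1) :
    1 - ‖w‖ ≤ ‖1 - (inner ℂ a w : ℂ)‖ := by
  have h1 : ‖(inner ℂ a w : ℂ)‖ ≤ ‖w‖ :=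
    (norm_inner_le_norm a w).trans (mul_le_of_le_one_left (norm_nonneg _) ha)
  have h2 := norm_sub_norm_le (1 : ℂ) (inner ℂ a w)
  rw [norm_one] at h2
  linarith

lemma sub_mem_aniso_of_norm_one_sub_inner_lt {a w : En n} (ha : ‖a‖ < 1) (hw : ‖w‖ < 1) {s : ℝ}
    (hs : s < 1 / 2) (hE : ‖1 - (inner ℂ a w : ℂ)‖ < s) :
    w - ((Real.sqrt (1 - 2 * s) / ‖a‖ : ℝ) : ℂ) • a ∈
      aniso 3 (((Real.sqrt (1 - 2 * s) / ‖a‖ : ℝ) : ℂ) • a) := by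
  have hs0 : 0 < s := (norm_nonneg _).trans_lt hE
  have haw : 1 - s < ‖a‖ := by
    have := one_sub_norm_le_norm_one_sub_inner (a := a) hw.le
    linarith
  have ha0 : 0 < ‖a‖ := by linarith
  set ρ := Real.sqrt (1 - 2 * s) with hρ
  have hρ2 : ρ ^ 2 = 1 - 2 * s := Real.sq_sqrt (by linarith)
  have hρ0 : 0 ≤ ρ := Real.sqrt_nonneg _
  have hρ1 : ρ ≤ 1 - s := by
    apply Real.sqrt_le_iff.2
    constructor <;> nlinarith
  have hρ3 : 1 - 2 * s ≤ ρ := by nlinarith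
  set τ := ρ / ‖a‖ with hτ
  have hτa : τ * ‖a‖ = ρ := by rw [hτ]; field_simp
  have hτ0 : 0 ≤ τ := by positivity
  have hτ1 : τ ≤ 1 := by
    rw [hτ, div_le_one ha0]; linarith
  have hτ2 : 1 - 2 * s ≤ τ := by nlinarith
  have hb : ‖((τ : ℝ) : ℂ) • a‖ = ρ := by
    rw [norm_smul, norm_real, Real.norm_of_nonneg hτ0, hτa]
  have hin : (inner ℂ (((τ : ℝ) : ℂ) • a) w : ℂ) = τ * inner ℂ a w := by
    rw [inner_smul_left, conj_ofReal]
  have hre : 1 - s < (inner ℂ a w : ℂ).re := by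
    have h1 := (re_le_norm (1 - (inner ℂ a w : ℂ))).trans_lt hE
    simp at h1
    linarith
  constructor
  · rw [inner_sub_right, inner_self_eq_ofReal, hb, hρ2, hin]
    have : (τ : ℂ) * inner ℂ a w - ((1 - 2 * s : ℝ) : ℂ) =
        -(τ * (1 - inner ℂ a w)) + ((τ - (1 - 2 * s) : ℝ) : ℂ) := by
      push_cast; ring
    rw [this]
    refine (norm_add_le _ _).trans_lt ?_
    rw [norm_neg, norm_mul, norm_real, norm_real, Real.norm_of_nonneg hτ0,
      Real.norm_of_nonneg (by linarith)]
    nlinarith [norm_nonneg (1 - (inner ℂ a w : ℂ))]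
  · have h := norm_sub_sq (𝕜 := ℂ) w (((τ : ℝ) : ℂ) • a)
    rw [hb, hρ2] at h
    have h2 : RCLike.re (inner ℂ w (((τ : ℝ) : ℂ) • a) : ℂ) = τ * (inner ℂ a w : ℂ).re := by
      rw [inner_re_symm, hin]; simp
    rw [h, h2, hb, hρ2]
    have : (1 - 2 * s) * (1 - s) ≤ τ * (inner ℂ a w : ℂ).re :=
      mul_le_mul hτ2 hre.le (by linarith) hτ0
    nlinarith [norm_nonneg w]

/-- Volume of the nonisotropic sets `{w : |1-⟨w,a⟩| < s}`. -/
lemma volume_norm_one_sub_inner_lt_le {a : En n} (ha : ‖a‖ < 1) {s : ℝ} (hs : 0 < s) :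
    volume {w ∈ ball (0 : En n) 1 | ‖1 - (inner ℂ a w : ℂ)‖ < s} ≤
      ENNReal.ofReal ((2 * s) ^ (n + 1)) * volume (ball (0 : En n) (Real.sqrt 3 + 3)) := by
  rcases lt_or_ge s (1 / 2) with h | h
  · rcases Set.eq_empty_or_nonempty {w ∈ ball (0 : En n) 1 | ‖1 - (inner ℂ a w : ℂ)‖ < s}
      with he | ⟨w₀, hw₀, hE₀⟩
    · rw [he]; simp
    have ha0 : 0 < ‖a‖ := by
      have := one_sub_norm_le_norm_one_sub_inner (a := a) (mem_ball_zero_iff.1 hw₀).le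
      linarith
    set b : En n := ((Real.sqrt (1 - 2 * s) / ‖a‖ : ℝ) : ℂ) • a with hb
    have hb2 : 1 - ‖b‖ ^ 2 = 2 * s := by
      rw [hb, norm_smul, norm_real, Real.norm_of_nonneg (by positivity), div_mul_cancel₀ _ ha0.ne',
        Real.sq_sqrt (by linarith)]
      ring
    have hbb : b ∈ ball (0 : En n) 1 := mem_ball_of_one_sub_normSq_pos (by linarith)
    calc _ ≤ volume ((fun w => w + -b) ⁻¹' aniso 3 b) := by
          refine measure_mono fun w hw => ?_
          have := sub_mem_aniso_of_norm_one_sub_inner_lt ha (mem_ball_zero_iff.1 hw.1) h hw.2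
          rw [Set.mem_preimage, ← sub_eq_add_neg]
          exact this
      _ = volume (aniso 3 b) := measure_preimage_add_right _ _ _
      _ ≤ _ := by
          have := volume_aniso_le (by norm_num : (0 : ℝ) ≤ 3) hbb
          rwa [hb2] at this
  · calc _ ≤ volume (ball (0 : En n) (Real.sqrt 3 + 3)) := by
          refine measure_mono fun w hw => ball_subset_ball ?_ hw.1
          linarith [Real.sqrt_nonneg 3]
      _ ≤ _ := by
          refine le_mul_of_one_le_left' ?_
          rw [ENNReal.one_le_ofReal]
          exact one_le_pow₀ (by linarith)

/-- Forelli–Rudin type estimate, unweighted case. -/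
lemma exists_lintegral_kernel_le (n : ℕ) {N : ℝ} (hN : (n : ℝ) + 1 < N) :
    ∃ C : ℝ≥0∞, C ≠ ∞ ∧ ∀ a : En n, ‖a‖ < 1 →
      ∫⁻ w in ball (0 : En n) 1, ENNReal.ofReal (‖1 - (inner ℂ a w : ℂ)‖ ^ (-N)) ≤
        C * ENNReal.ofReal ((1 - ‖a‖) ^ ((n : ℝ) + 1 - N)) := by
  have hN0 : 0 < N := lt_trans (by positivity) hN
  set A := volume (ball (0 : En n) (Real.sqrt 3 + 3)) with hA
  have hA' : A ≠ ∞ := measure_ball_lt_top.ne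
  set e : ℝ := -((n + 1) / N) with he
  have he1 : -1 < e := by
    rw [he, neg_lt_neg_iff, div_lt_one hN0]; exact hN
  refine ⟨A * ENNReal.ofReal (2 ^ (n + 1)) * ENNReal.ofReal ((e + 1)⁻¹), by finiteness, ?_⟩
  intro a ha
  set d := 1 - ‖a‖ with hd
  have hd0 : 0 < d := by linarith
  have hlow : ∀ w ∈ ball (0 : En n) 1, d ≤ ‖1 - (inner ℂ a w : ℂ)‖ := fun w hw =>
    one_sub_norm_le_norm_one_sub_inner (mem_ball_zero_iff.1 hw).le
  have hmeas : Measurable fun w : En n => ‖1 - (inner ℂ a w : ℂ)‖ ^ (-N) := by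
    have : Measurable fun w : En n => ‖1 - (inner ℂ a w : ℂ)‖ :=
      (by fun_prop : Continuous fun w : En n => ‖1 - (inner ℂ a w : ℂ)‖).measurable
    exact this.pow_const _
  rw [lintegral_eq_lintegral_meas_lt _ (Eventually.of_forall fun w => by positivity)
    hmeas.aemeasurable]
  set T := d ^ (-N) with hT
  have hT0 : 0 < T := Real.rpow_pos_of_pos hd0 _
  calc ∫⁻ t in Set.Ioi (0 : ℝ), (volume.restrict (ball (0 : En n) 1))
        {w | t < ‖1 - (inner ℂ a w : ℂ)‖ ^ (-N)}
      ≤ ∫⁻ t in Set.Ioi (0 : ℝ), (Set.Ioc 0 T).indicator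
          (fun t => A * ENNReal.ofReal (2 ^ (n + 1)) * ENNReal.ofReal (t ^ e)) t := by
        refine setLIntegral_mono_ae' measurableSet_Ioi (Eventually.of_forall fun t ht => ?_)
        have ht0 : (0 : ℝ) < t := ht
        rw [Measure.restrict_apply (measurableSet_lt measurable_const hmeas)]
        by_cases htT : t ≤ T
        · rw [Set.indicator_of_mem (show t ∈ Set.Ioc 0 T from ⟨ht0, htT⟩)]
          have hs0 : 0 < t ^ (-N⁻¹) := Real.rpow_pos_of_pos ht0 _
          refine (measure_mono ?_).trans ((volume_norm_one_sub_inner_lt_le ha hs0).trans_eq ?_)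
          · rintro w ⟨hw, hwb⟩
            refine ⟨hwb, ?_⟩
            have hx0 : 0 < ‖1 - (inner ℂ a w : ℂ)‖ := hd0.trans_le (hlow w hwb)
            have hw' : t < ‖1 - (inner ℂ a w : ℂ)‖ ^ (-N) := hw
            have := Real.rpow_lt_rpow_of_neg ht0 hw' (by simpa using hN0 : -N⁻¹ < 0)
            rwa [← Real.rpow_mul hx0.le, neg_mul_neg, mul_inv_cancel₀ hN0.ne', Real.rpow_one]
              at this
          · rw [mul_comm, mul_assoc, mul_pow, ENNReal.ofReal_mul (by positivity),
              ← Real.rpow_natCast (t ^ (-N⁻¹)), ← Real.rpow_mul ht0.le]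
            congr 4
            rw [he]; push_cast; field_simp
        · rw [Set.indicator_of_notMem (fun h => htT h.2)]
          refine le_of_eq ?_
          convert measure_empty (μ := (volume : Measure (En n)))
          refine Set.eq_empty_of_forall_notMem ?_
          rintro w ⟨hw, hwb⟩
          have hw' : t < ‖1 - (inner ℂ a w : ℂ)‖ ^ (-N) := hw
          exact htT (hw'.le.trans
            (Real.rpow_le_rpow_of_nonpos hd0 (hlow w hwb) (by linarith)))
    _ = A * ENNReal.ofReal (2 ^ (n + 1)) * ∫⁻ t in Set.Ioc 0 T, ENNReal.ofReal (t ^ e) := by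
        rw [lintegral_indicator measurableSet_Ioc, Measure.restrict_restrict measurableSet_Ioc,
          Set.inter_eq_self_of_subset_left (fun t ht => ht.1),
          lintegral_const_mul' _ _ (by finiteness)]
    _ = A * ENNReal.ofReal (2 ^ (n + 1)) * ENNReal.ofReal (T ^ (e + 1) / (e + 1)) := by
        congr 1
        rw [← ofReal_integral_eq_lintegral_ofReal, ← intervalIntegral.integral_of_le hT0.le,
          integral_rpow (Or.inl he1), Real.zero_rpow (by linarith), sub_zero]
        · exact (intervalIntegral.intervalIntegrable_rpow' he1).1
        · exact ae_restrict_of_forall_mem measurableSet_Ioc fun t ht =>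
            Real.rpow_nonneg ht.1.le _
    _ = _ := by
        rw [hT, ← Real.rpow_mul hd0.le, div_eq_inv_mul, ENNReal.ofReal_mul
          (inv_nonneg.2 (by linarith)), ← mul_assoc]
        congr 3
        rw [he]; field_simp; ring

end KernelVolume

section Polar

/-- Integration of a nonnegative function in polar coordinates. -/
lemma lintegral_eq_lintegral_toSphere {E : Type*} [NormedAddCommGroup E] [NormedSpace ℝ E]
    [FiniteDimensional ℝ E] [MeasurableSpace E] [BorelSpace E] [Nontrivial E] (μ : Measure E)
    [μ.IsAddHaarMeasure] {G : E → ℝ≥0∞} (hG : Measurable G) :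
    ∫⁻ x, G x ∂μ = ∫⁻ ζ : sphere (0 : E) 1, (∫⁻ r in Set.Ioi (0 : ℝ),
      ENNReal.ofReal (r ^ (Module.finrank ℝ E - 1)) * G (r • (ζ : E))) ∂μ.toSphere := by
  set k := Module.finrank ℝ E - 1
  have hmeas : Measurable fun p : sphere (0 : E) 1 × Set.Ioi (0 : ℝ) => G ((p.2 : ℝ) • (p.1 : E)) :=
    hG.comp (by fun_prop : Continuous fun p : sphere (0 : E) 1 × Set.Ioi (0 : ℝ) =>
      (p.2 : ℝ) • (p.1 : E)).measurable
  calc ∫⁻ x, G x ∂μ = ∫⁻ x : ({(0)}ᶜ : Set E), G x ∂(μ.comap (↑)) := by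
        rw [lintegral_subtype_comap (measurableSet_singleton _).compl, restrict_compl_singleton]
    _ = ∫⁻ p, G ((p.2 : ℝ) • (p.1 : E)) ∂μ.toSphere.prod (.volumeIoiPow k) := by
        rw [← μ.measurePreserving_homeomorphUnitSphereProd.lintegral_comp hmeas]
        refine lintegral_congr fun x => ?_
        have hx : ‖(x : E)‖ ≠ 0 := norm_ne_zero_iff.2 x.2
        simp [smul_smul, mul_inv_cancel₀ hx]
    _ = _ := by
        rw [lintegral_prod _ hmeas.aemeasurable]
        refine lintegral_congr fun ζ => ?_
        have hζ : Measurable fun r : Set.Ioi (0 : ℝ) => G ((r : ℝ) • (ζ : E)) :=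
          hmeas.comp measurable_prodMk_left
        rw [Measure.volumeIoiPow]
        refine (lintegral_withDensity_eq_lintegral_mul _ (by fun_prop) hζ).trans ?_
        exact lintegral_subtype_comap measurableSet_Ioi
          fun r : ℝ => ENNReal.ofReal (r ^ k) * G (r • (ζ : E))

/-- A comparison of two integrals over the unit ball follows from the comparison on rays. -/
lemma lintegral_ball_le_of_rays {E : Type*} [NormedAddCommGroup E] [NormedSpace ℝ E]
    [FiniteDimensional ℝ E] [MeasurableSpace E] [BorelSpace E] [Nontrivial E] (μ : Measure E)
    [μ.IsAddHaarMeasure] {G H : E → ℝ≥0∞} (hG : Measurable G) (hH : Measurable H)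
    {C : ℝ≥0∞} (hC : C ≠ ∞)
    (h : ∀ ζ : E, ‖ζ‖ = 1 →
      ∫⁻ r in Set.Ioo (0 : ℝ) 1, ENNReal.ofReal (r ^ (Module.finrank ℝ E - 1)) * G (r • ζ) ≤
      C * ∫⁻ r in Set.Ioo (0 : ℝ) 1, ENNReal.ofReal (r ^ (Module.finrank ℝ E - 1)) * H (r • ζ)) :
    ∫⁻ x in ball (0 : E) 1, G x ∂μ ≤ C * ∫⁻ x in ball (0 : E) 1, H x ∂μ := by
  have key : ∀ F : E → ℝ≥0∞, Measurable F → ∫⁻ x in ball (0 : E) 1, F x ∂μ =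
      ∫⁻ ζ : sphere (0 : E) 1, (∫⁻ r in Set.Ioo (0 : ℝ) 1,
        ENNReal.ofReal (r ^ (Module.finrank ℝ E - 1)) * F (r • (ζ : E))) ∂μ.toSphere := by
    intro F hF
    rw [← lintegral_indicator measurableSet_ball,
      lintegral_eq_lintegral_toSphere μ (hF.indicator measurableSet_ball)]
    refine lintegral_congr fun ζ => ?_
    have hζ : ‖(ζ : E)‖ = 1 := by simp
    rw [← lintegral_indicator measurableSet_Ioi, ← lintegral_indicator measurableSet_Ioo]
    refine lintegral_congr fun r => ?_
    by_cases hr0 : 0 < r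
    · rw [Set.indicator_of_mem (show r ∈ Set.Ioi (0 : ℝ) from hr0)]
      have hn : ‖r • (ζ : E)‖ = r := by rw [norm_smul, hζ, mul_one, Real.norm_of_nonneg hr0.le]
      by_cases hr1 : r < 1
      · rw [Set.indicator_of_mem (show r ∈ Set.Ioo (0 : ℝ) 1 from ⟨hr0, hr1⟩),
          Set.indicator_of_mem (by rwa [mem_ball_zero_iff, hn])]
      · rw [Set.indicator_of_notMem (fun hr : r ∈ Set.Ioo (0 : ℝ) 1 => hr1 hr.2),
          Set.indicator_of_notMem (by rwa [mem_ball_zero_iff, hn]), mul_zero]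
    · rw [Set.indicator_of_notMem (show r ∉ Set.Ioi (0 : ℝ) from hr0),
        Set.indicator_of_notMem (fun hr : r ∈ Set.Ioo (0 : ℝ) 1 => hr0 hr.1)]
  rw [key G hG, key H hH, ← lintegral_const_mul' _ _ hC]
  exact lintegral_mono fun ζ => h ζ (by simp)

end Polar

section Weighted

variable {n : ℕ}

lemma setLIntegral_one_sub_rpow {α y : ℝ} (hα : -1 < α) (hy : 0 ≤ y) :
    ∫⁻ r in Set.Ioo (1 - y) 1, ENNReal.ofReal ((1 - r) ^ α) =
      ENNReal.ofReal (y ^ (α + 1) / (α + 1)) := by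
  have hi : IntervalIntegrable (fun t : ℝ => t ^ α) volume 0 y :=
    intervalIntegral.intervalIntegrable_rpow' hα
  have hi2 : IntervalIntegrable (fun r : ℝ => (1 - r) ^ α) volume (1 - y) 1 := by
    have := (hi.comp_sub_left 1).symm
    simpa using this
  rw [Measure.restrict_congr_set Ioo_ae_eq_Ioc, ← ofReal_integral_eq_lintegral_ofReal,
    ← intervalIntegral.integral_of_le (by linarith)]
  · rw [intervalIntegral.integral_comp_sub_left (fun t : ℝ => t ^ α) 1, sub_self, sub_sub_cancel,
      integral_rpow (Or.inl hα), Real.zero_rpow (by linarith), sub_zero]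
  · exact hi2.1
  · exact ae_restrict_of_forall_mem measurableSet_Ioc fun t ht =>
      Real.rpow_nonneg (by linarith [ht.2]) _

/-- The one-dimensional estimate behind the weighted Forelli–Rudin inequality. -/
lemma lintegral_ray_le (k : ℕ) {α N : ℝ} (hα : -1 < α) (hα0 : α < 0) (hN : 0 < N) {l : ℂ}
    (hl : ‖l‖ < 1) :
    ∫⁻ r in Set.Ioo (0 : ℝ) 1, ENNReal.ofReal (r ^ k) *
      ENNReal.ofReal (‖1 - (r : ℂ) * l‖ ^ (-N) * (1 - r ^ 2) ^ α) ≤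
    (ENNReal.ofReal (5 ^ (-α)) +
      ENNReal.ofReal (2 ^ k * ((3 / 4) ^ (-N) * 4⁻¹ ^ α * (5 / 4) ^ (N - α) / (α + 1)))) *
      ∫⁻ r in Set.Ioo (0 : ℝ) 1, ENNReal.ofReal (r ^ k) *
        ENNReal.ofReal (‖1 - (r : ℂ) * l‖ ^ (α - N)) := by
  set x := ‖1 - l‖ with hx
  have hx0 : 0 < x := by
    rw [hx, norm_pos_iff, sub_ne_zero]
    rintro rfl
    simp at hl
  have hx2 : x < 2 := by
    refine (norm_sub_le _ _).trans_lt ?_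
    rw [norm_one]; linarith
  have hpos : ∀ r ∈ Set.Ioo (0 : ℝ) 1, 0 < ‖1 - (r : ℂ) * l‖ := by
    intro r hr
    rw [norm_pos_iff, sub_ne_zero]
    intro h
    have : ‖(r : ℂ) * l‖ < 1 := by
      rw [norm_mul, norm_real, Real.norm_of_nonneg hr.1.le]
      nlinarith [norm_nonneg l, hr.1, hr.2]
    rw [← h, norm_one] at this
    exact lt_irrefl _ this
  have hdist : ∀ r ∈ Set.Ioo (0 : ℝ) 1, |‖1 - (r : ℂ) * l‖ - x| ≤ 1 - r := by
    intro r hr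
    refine (abs_norm_sub_norm_le _ _).trans ?_
    have : (1 - (r : ℂ) * l) - (1 - l) = ((1 - r : ℝ) : ℂ) * l := by push_cast; ring
    rw [this, norm_mul, norm_real, Real.norm_of_nonneg (by linarith [hr.2])]
    exact mul_le_of_le_one_right (by linarith [hr.2]) hl.le
  have hsq : ∀ r ∈ Set.Ioo (0 : ℝ) 1, (1 - r ^ 2) ^ α ≤ (1 - r) ^ α := by
    intro r hr
    exact Real.rpow_le_rpow_of_nonpos (by linarith [hr.2]) (by nlinarith [hr.1, hr.2]) hα0.le
  set H : ℝ → ℝ≥0∞ := fun r => ENNReal.ofReal (r ^ k) *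
        ENNReal.ofReal (‖1 - (r : ℂ) * l‖ ^ (α - N)) with hH
  have hunion : Set.Ioo (0 : ℝ) 1 = Set.Ioc 0 (1 - x / 4) ∪ Set.Ioo (1 - x / 4) 1 := by
    rw [Set.Ioc_union_Ioo_eq_Ioo] <;> linarith
  have hfar : ∫⁻ r in Set.Ioc 0 (1 - x / 4), ENNReal.ofReal (r ^ k) *
      ENNReal.ofReal (‖1 - (r : ℂ) * l‖ ^ (-N) * (1 - r ^ 2) ^ α) ≤
      ENNReal.ofReal (5 ^ (-α)) * ∫⁻ r in Set.Ioo (0 : ℝ) 1, H r := by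
    rw [← lintegral_const_mul' _ _ ENNReal.ofReal_ne_top]
    refine le_trans ?_ (lintegral_mono_set
      (show Set.Ioc 0 (1 - x / 4) ⊆ Set.Ioo 0 1 from hunion ▸ Set.subset_union_left))
    refine setLIntegral_mono_ae' measurableSet_Ioc (Eventually.of_forall fun r hr => ?_)
    have hr1 : r ∈ Set.Ioo (0 : ℝ) 1 := ⟨hr.1, by linarith [hr.2]⟩
    have hp := hpos r hr1
    simp only [hH]
    rw [mul_left_comm, ← ENNReal.ofReal_mul (by positivity : (0 : ℝ) ≤ 5 ^ (-α))]
    refine mul_le_mul_right (ENNReal.ofReal_le_ofReal ?_) _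
    rw [sub_eq_add_neg α N, Real.rpow_add hp, mul_comm, ← mul_assoc]
    gcongr
    refine (hsq r hr1).trans ?_
    have h5 : ‖1 - (r : ℂ) * l‖ / 5 ≤ 1 - r := by
      have := (abs_le.1 (hdist r hr1)).2
      linarith [hr.2]
    refine (Real.rpow_le_rpow_of_nonpos (by positivity) h5 hα0.le).trans_eq ?_
    rw [Real.div_rpow hp.le (by norm_num), Real.rpow_neg (by norm_num), div_eq_inv_mul]
  have hnear : ∫⁻ r in Set.Ioo (1 - x / 4) 1, ENNReal.ofReal (r ^ k) *
      ENNReal.ofReal (‖1 - (r : ℂ) * l‖ ^ (-N) * (1 - r ^ 2) ^ α) ≤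
      ENNReal.ofReal (2 ^ k * ((3 / 4) ^ (-N) * 4⁻¹ ^ α * (5 / 4) ^ (N - α) / (α + 1))) *
        ∫⁻ r in Set.Ioo (0 : ℝ) 1, H r := by
    have hmem : ∀ r ∈ Set.Ioo (1 - x / 4) 1, r ∈ Set.Ioo (0 : ℝ) 1 := fun r hr =>
      ⟨by linarith [hr.1], hr.2⟩
    have hup : ∫⁻ r in Set.Ioo (1 - x / 4) 1, ENNReal.ofReal (r ^ k) *
        ENNReal.ofReal (‖1 - (r : ℂ) * l‖ ^ (-N) * (1 - r ^ 2) ^ α) ≤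
        ENNReal.ofReal ((3 / 4 * x) ^ (-N)) *
          ENNReal.ofReal ((x / 4) ^ (α + 1) / (α + 1)) := by
      rw [← setLIntegral_one_sub_rpow hα (by positivity),
        ← lintegral_const_mul' _ _ ENNReal.ofReal_ne_top]
      refine setLIntegral_mono_ae' measurableSet_Ioo (Eventually.of_forall fun r hr => ?_)
      have hr1 := hmem r hr
      rw [← ENNReal.ofReal_mul (by positivity : 0 ≤ (3 / 4 * x) ^ (-N)),
        ← ENNReal.ofReal_mul (pow_nonneg hr1.1.le _)]
      apply ENNReal.ofReal_le_ofReal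
      have h1 : (1 - r ^ 2) ^ α ≤ (1 - r) ^ α := hsq r hr1
      have h2 : ‖1 - (r : ℂ) * l‖ ^ (-N) ≤ (3 / 4 * x) ^ (-N) := by
        refine Real.rpow_le_rpow_of_nonpos (by positivity) ?_ (by linarith)
        have := (abs_le.1 (hdist r hr1)).1
        linarith [hr.1]
      have h3 : 0 ≤ (1 - r ^ 2) ^ α := Real.rpow_nonneg (by nlinarith [hr1.1, hr1.2]) _
      calc r ^ k * (‖1 - (r : ℂ) * l‖ ^ (-N) * (1 - r ^ 2) ^ α)
          ≤ 1 * ((3 / 4 * x) ^ (-N) * (1 - r) ^ α) := by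
            gcongr
            exact pow_le_one₀ hr1.1.le hr1.2.le
        _ = _ := one_mul _
    have hlow : ENNReal.ofReal (2⁻¹ ^ k * (5 / 4 * x) ^ (α - N)) * ENNReal.ofReal (x / 4) ≤
        ∫⁻ r in Set.Ioo (0 : ℝ) 1, H r := by
      refine le_trans ?_ (lintegral_mono_set
        (show Set.Ioo (1 - x / 4) 1 ⊆ Set.Ioo 0 1 from hmem))
      calc _ = ∫⁻ r in Set.Ioo (1 - x / 4) 1,
            ENNReal.ofReal (2⁻¹ ^ k * (5 / 4 * x) ^ (α - N)) := by
            rw [setLIntegral_const, Real.volume_Ioo, sub_sub_cancel]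
        _ ≤ _ := by
            refine setLIntegral_mono_ae' measurableSet_Ioo (Eventually.of_forall fun r hr => ?_)
            have hr1 := hmem r hr
            simp only [hH]
            rw [← ENNReal.ofReal_mul (pow_nonneg hr1.1.le _)]
            apply ENNReal.ofReal_le_ofReal
            have h2 : (5 / 4 * x) ^ (α - N) ≤ ‖1 - (r : ℂ) * l‖ ^ (α - N) := by
              refine Real.rpow_le_rpow_of_nonpos (hpos r hr1) ?_ (by linarith)
              have := (abs_le.1 (hdist r hr1)).2
              linarith [hr.1]
            have h3 : (2⁻¹ : ℝ) ≤ r := by linarith [hr.1]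
            have := hr1.1.le
            gcongr
    refine hup.trans ((le_of_eq ?_).trans (mul_le_mul_right hlow _))
    rw [← ENNReal.ofReal_mul (by positivity), ← ENNReal.ofReal_mul (by positivity),
      ← ENNReal.ofReal_mul (by have : 0 < α + 1 := by linarith
                               positivity)]
    congr 1
    have e1 : (3 / 4 * x) ^ (-N) = (3 / 4 : ℝ) ^ (-N) * x ^ (-N) :=
      Real.mul_rpow (by norm_num) hx0.le
    have e2 : (5 / 4 * x) ^ (α - N) = (5 / 4 : ℝ) ^ (α - N) * (x ^ α * x ^ (-N)) := by
      rw [Real.mul_rpow (by norm_num) hx0.le, ← Real.rpow_add hx0, sub_eq_add_neg α N]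
    have e3 : (x / 4) ^ (α + 1) = x ^ α * 4⁻¹ ^ α * (x / 4) := by
      rw [Real.rpow_add_one (by positivity), div_eq_mul_inv, Real.mul_rpow hx0.le (by norm_num)]
    have e4 : (5 / 4 : ℝ) ^ (N - α) * (5 / 4 : ℝ) ^ (α - N) = 1 := by
      rw [← Real.rpow_add (by norm_num)]; simp
    have e5 : (2 : ℝ) ^ k * 2⁻¹ ^ k = 1 := by
      rw [← mul_pow]; norm_num
    rw [e1, e2, e3]
    have hα1 : α + 1 ≠ 0 := by linarith
    set P := (3 / 4 : ℝ) ^ (-N)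
    set Q := x ^ (-N)
    set R := (4⁻¹ : ℝ) ^ α
    set U := x ^ α
    calc P * Q * (U * R * (x / 4) / (α + 1))
        = (2 ^ k * 2⁻¹ ^ k) * ((5 / 4 : ℝ) ^ (N - α) * (5 / 4 : ℝ) ^ (α - N)) *
          (P * Q * (U * R * (x / 4) / (α + 1))) := by rw [e4, e5]; ring
      _ = _ := by ring
  rw [add_mul]
  conv_lhs => rw [hunion]
  exact (lintegral_union_le _ _ _).trans (add_le_add hfar hnear)

end Weighted

section ForelliRudin

variable {n : ℕ}

lemma measurable_kernel_rpow (a : En n) (e : ℝ) :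
    Measurable fun w : En n => ‖1 - (inner ℂ a w : ℂ)‖ ^ e :=
  (by fun_prop : Continuous fun w : En n => ‖1 - (inner ℂ a w : ℂ)‖).measurable.pow_const _

lemma measurable_one_sub_normSq_rpow (e : ℝ) : Measurable fun w : En n => (1 - ‖w‖ ^ 2) ^ e :=
  (by fun_prop : Continuous fun w : En n => 1 - ‖w‖ ^ 2).measurable.pow_const _

lemma lintegral_ball_le_of_complex_rays (hn : 1 ≤ n) {G H : En n → ℝ≥0∞} (hG : Measurable G)
    (hH : Measurable H) {C : ℝ≥0∞} (hC : C ≠ ∞)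
    (h : ∀ ζ : En n, ‖ζ‖ = 1 →
      ∫⁻ r in Set.Ioo (0 : ℝ) 1, ENNReal.ofReal (r ^ (2 * n - 1)) * G ((r : ℂ) • ζ) ≤
      C * ∫⁻ r in Set.Ioo (0 : ℝ) 1, ENNReal.ofReal (r ^ (2 * n - 1)) * H ((r : ℂ) • ζ)) :
    ∫⁻ x in ball (0 : En n) 1, G x ≤ C * ∫⁻ x in ball (0 : En n) 1, H x := by
  have : Nonempty (Fin n) := ⟨⟨0, hn⟩⟩
  have : Nontrivial (En n) := inferInstance
  have hdim : Module.finrank ℝ (En n) = 2 * n := by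
    rw [← Module.finrank_mul_finrank ℝ ℂ (En n)]
    simp
  refine lintegral_ball_le_of_rays volume hG hH hC fun ζ hζ => ?_
  rw [hdim]
  exact h ζ hζ

lemma exists_lintegral_weight_le (hn : 1 ≤ n) {α N : ℝ} (hα : -1 < α) (hN : 0 < N) :
    ∃ C : ℝ≥0∞, C ≠ ∞ ∧ ∀ a : En n, ‖a‖ < 1 →
      ∫⁻ w in ball (0 : En n) 1,
        ENNReal.ofReal (‖1 - (inner ℂ a w : ℂ)‖ ^ (-N) * (1 - ‖w‖ ^ 2) ^ α) ≤
      C * ∫⁻ w in ball (0 : En n) 1, ENNReal.ofReal (‖1 - (inner ℂ a w : ℂ)‖ ^ (α - N)) := by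
  rcases lt_or_ge α 0 with h0 | h0
  · refine ⟨ENNReal.ofReal (5 ^ (-α)) + ENNReal.ofReal (2 ^ (2 * n - 1) *
        ((3 / 4) ^ (-N) * 4⁻¹ ^ α * (5 / 4) ^ (N - α) / (α + 1))), by finiteness, fun a ha => ?_⟩
    have hmeas : Measurable fun w : En n =>
        ENNReal.ofReal (‖1 - (inner ℂ a w : ℂ)‖ ^ (-N) * (1 - ‖w‖ ^ 2) ^ α) :=
      ((measurable_kernel_rpow a _).mul (measurable_one_sub_normSq_rpow α)).ennreal_ofReal
    refine lintegral_ball_le_of_complex_rays hn hmeas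
      (measurable_kernel_rpow a _).ennreal_ofReal (by finiteness) fun ζ hζ => ?_
    have hl : ‖(inner ℂ a ζ : ℂ)‖ < 1 := by
      refine (norm_inner_le_norm a ζ).trans_lt ?_
      rw [hζ, mul_one]; exact ha
    have hin : ∀ r : ℝ, (inner ℂ a ((r : ℂ) • ζ) : ℂ) = r * inner ℂ a ζ :=
      fun r => inner_smul_right _ _ _
    have hnr : ∀ r : ℝ, ‖(r : ℂ) • ζ‖ ^ 2 = r ^ 2 := fun r => by
      rw [norm_smul, hζ, mul_one, norm_real, Real.norm_eq_abs, sq_abs]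
    simp only [hin, hnr]
    exact lintegral_ray_le _ hα h0 hN hl
  · refine ⟨ENNReal.ofReal (2 ^ α), by finiteness, fun a ha => ?_⟩
    rw [← lintegral_const_mul' _ _ ENNReal.ofReal_ne_top]
    refine setLIntegral_mono_ae' measurableSet_ball (Eventually.of_forall fun w hw => ?_)
    rw [← ENNReal.ofReal_mul (by positivity)]
    apply ENNReal.ofReal_le_ofReal
    have hw1 : ‖w‖ < 1 := mem_ball_zero_iff.1 hw
    have hlow := one_sub_norm_le_norm_one_sub_inner' (w := w) ha.le
    have hp : 0 < ‖1 - (inner ℂ a w : ℂ)‖ := by linarith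
    rw [sub_eq_add_neg α N, Real.rpow_add hp, mul_comm, ← mul_assoc,
      ← Real.mul_rpow (by norm_num) hp.le]
    gcongr
    · exact (one_sub_normSq_pos hw).le
    · nlinarith [norm_nonneg w]

/-- Forelli–Rudin type estimate with a power weight. -/
lemma exists_lintegral_weighted_kernel_le (hn : 1 ≤ n) {α N : ℝ} (hα : -1 < α)
    (hN : (n : ℝ) + 1 + α < N) :
    ∃ C : ℝ≥0∞, C ≠ ∞ ∧ ∀ a : En n, ‖a‖ < 1 →
      ∫⁻ w in ball (0 : En n) 1,
        ENNReal.ofReal (‖1 - (inner ℂ a w : ℂ)‖ ^ (-N) * (1 - ‖w‖ ^ 2) ^ α) ≤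
      C * ENNReal.ofReal ((1 - ‖a‖) ^ ((n : ℝ) + 1 + α - N)) := by
  have hn' : (1 : ℝ) ≤ n := by exact_mod_cast hn
  obtain ⟨C₁, hC₁, h₁⟩ := exists_lintegral_weight_le hn hα (by linarith : 0 < N)
  obtain ⟨C₂, hC₂, h₂⟩ := exists_lintegral_kernel_le n (by linarith : (n : ℝ) + 1 < N - α)
  refine ⟨C₁ * C₂, by finiteness, fun a ha => (h₁ a ha).trans ?_⟩
  have := h₂ a ha
  rw [neg_sub] at this
  rw [mul_assoc, (by ring : (n : ℝ) + 1 + α - N = n + 1 - (N - α))]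
  gcongr

end ForelliRudin

section WeightedMeasure

variable {n : ℕ}

/-- The density constant of `dv_α` with respect to Lebesgue measure. -/
def wConst (n : ℕ) (α : ℝ) : ℝ := (volume (ball (0 : En n) 1)).toReal⁻¹ * volConst n α

lemma wConst_pos (n : ℕ) {α : ℝ} (hα : -1 < α) : 0 < wConst n α := by
  have h1 : 0 < (volume (ball (0 : En n) 1)).toReal :=
    ENNReal.toReal_pos (measure_ball_pos _ _ one_pos).ne' measure_ball_lt_top.ne
  have h2 : 0 < volConst n α := by
    have hn0 : (0 : ℝ) ≤ n := n.cast_nonneg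
    exact div_pos (Real.Gamma_pos_of_pos (by linarith))
      (mul_pos (by positivity) (Real.Gamma_pos_of_pos (by linarith)))
  exact mul_pos (inv_pos.2 h1) h2

lemma wMeas_eq (n : ℕ) (α : ℝ) : wMeas n α = (volume.restrict (ball (0 : En n) 1)).withDensity
    fun z => ENNReal.ofReal (wConst n α * (1 - ‖z‖ ^ 2) ^ α) := by
  have h1 : 0 < (volume (ball (0 : En n) 1)).toReal :=
    ENNReal.toReal_pos (measure_ball_pos _ _ one_pos).ne' measure_ball_lt_top.ne
  have h2 : (volume (ball (0 : En n) 1))⁻¹ =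
      ENNReal.ofReal ((volume (ball (0 : En n) 1)).toReal⁻¹) := by
    rw [ENNReal.ofReal_inv_of_pos h1, ENNReal.ofReal_toReal measure_ball_lt_top.ne]
  unfold wMeas vMeas wConst
  rw [withDensity_smul_measure, h2, ← withDensity_smul _
    ((measurable_one_sub_normSq_rpow α).const_mul _).ennreal_ofReal]
  congr 1
  ext z
  rw [Pi.smul_apply, smul_eq_mul, ← ENNReal.ofReal_mul (inv_nonneg.2 h1.le), mul_assoc]

lemma lintegral_wMeas (n : ℕ) (α : ℝ) (F : En n → ℝ≥0∞) :
    ∫⁻ z, F z ∂wMeas n α = ∫⁻ z in ball (0 : En n) 1,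
      ENNReal.ofReal (wConst n α * (1 - ‖z‖ ^ 2) ^ α) * F z := by
  rw [wMeas_eq, lintegral_withDensity_eq_lintegral_mul_non_measurable _
    ((measurable_one_sub_normSq_rpow α).const_mul _).ennreal_ofReal
    (Eventually.of_forall fun _ => ENNReal.ofReal_lt_top)]
  rfl

end WeightedMeasure

section Carleson

variable {n : ℕ}

/-- The test function `w ↦ (1-⟨w,a⟩)^{-M}`. -/
def testFun (M : ℕ) (a w : En n) : ℂ := ((1 - (inner ℂ a w : ℂ)) ^ M)⁻¹

lemma differentiableOn_testFun (M : ℕ) {a : En n} (ha : ‖a‖ < 1) :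
    DifferentiableOn ℂ (testFun M a) (ball 0 1) := by
  have h : Differentiable ℂ fun w : En n => (1 - (inner ℂ a w : ℂ)) ^ M :=
    ((differentiable_const 1).sub (innerSL ℂ a).differentiable).pow M
  refine h.differentiableOn.inv fun w hw => pow_ne_zero _ ?_
  have := one_sub_norm_le_norm_one_sub_inner (a := a) (mem_ball_zero_iff.1 hw).le
  exact norm_pos_iff.1 (by linarith)

lemma measurable_testFun (M : ℕ) (a : En n) : Measurable (testFun M a) :=
  (by fun_prop : Continuous fun w : En n => (1 - (inner ℂ a w : ℂ)) ^ M).measurable.inv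

lemma enorm_testFun (M : ℕ) (a w : En n) :
    ‖testFun M a w‖ₑ = ENNReal.ofReal (‖1 - (inner ℂ a w : ℂ)‖ ^ (-(M : ℝ))) := by
  rw [← ofReal_norm, testFun, norm_inv, norm_pow, Real.rpow_neg (norm_nonneg _),
    Real.rpow_natCast]

/-- Norm estimate for the test functions in `A^1_α`. -/
lemma exists_eLpNorm_testFun_le (hn : 1 ≤ n) {α : ℝ} (hα : -1 < α) {M : ℕ}
    (hM : (n : ℝ) + 1 + α < M) :
    ∃ C : ℝ≥0∞, C ≠ ∞ ∧ ∀ a : En n, ‖a‖ < 1 →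
      eLpNorm (testFun M a) 1 (wMeas n α) ≤
        C * ENNReal.ofReal ((1 - ‖a‖) ^ ((n : ℝ) + 1 + α - M)) := by
  obtain ⟨C, hC, h⟩ := exists_lintegral_weighted_kernel_le hn hα hM
  refine ⟨ENNReal.ofReal (wConst n α) * C, by finiteness, fun a ha => ?_⟩
  rw [eLpNorm_one_eq_lintegral_enorm, lintegral_wMeas, mul_assoc]
  refine le_trans (le_of_eq ?_) (mul_le_mul_right (h a ha) _)
  rw [← lintegral_const_mul' _ _ ENNReal.ofReal_ne_top]
  refine setLIntegral_congr_fun measurableSet_ball fun w hw => ?_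
  have hw0 := Real.rpow_nonneg (one_sub_normSq_pos hw).le α
  have hc := (wConst_pos n hα).le
  change ENNReal.ofReal _ * ‖testFun M a w‖ₑ = _
  rw [enorm_testFun, ← ENNReal.ofReal_mul (by positivity), ← ENNReal.ofReal_mul hc]
  congr 1
  ring

/-- Boundedness of the embedding on holomorphic functions forces a Carleson condition. -/
lemma exists_carleson_bound (hn : 1 ≤ n) {q α : ℝ} (hα : -1 < α) (hq : 0 < q)
    {μ : Measure (En n)} {K : ℝ≥0∞} (hK : K ≠ ∞)
    (hJ : ∀ g : En n → ℂ, DifferentiableOn ℂ g (ball 0 1) → MemLp g 1 (wMeas n α) →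
      eLpNorm g (ENNReal.ofReal q) μ ≤ K * eLpNorm g 1 (wMeas n α)) :
    ∃ C : ℝ≥0∞, C ≠ ∞ ∧ ∀ a ∈ ball (0 : En n) 1,
      μ {w ∈ ball (0 : En n) 1 | a ∈ anisoBall w} ≤
        C * ENNReal.ofReal ((1 - ‖a‖ ^ 2) ^ (((n : ℝ) + 1 + α) * q)) := by
  obtain ⟨M, hM⟩ := exists_nat_gt ((n : ℝ) + 1 + α)
  obtain ⟨C, hC, h⟩ := exists_eLpNorm_testFun_le hn hα hM
  set κ : ℝ := (n : ℝ) + 1 + α with hκ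
  refine ⟨(K * C) ^ q * ENNReal.ofReal ((2 ^ (M : ℝ) * 2⁻¹ ^ (κ - M)) ^ q),
    by finiteness, fun a ha => ?_⟩
  have ha1 : ‖a‖ < 1 := mem_ball_zero_iff.1 ha
  have hδ := one_sub_normSq_pos ha
  set δ := 1 - ‖a‖ ^ 2 with hδdef
  have hmem : MemLp (testFun M a) 1 (wMeas n α) :=
    ⟨(measurable_testFun M a).aestronglyMeasurable, (h a ha1).trans_lt (by finiteness)⟩
  have hnorm : eLpNorm (testFun M a) (ENNReal.ofReal q) μ ≤
      (K * C) * ENNReal.ofReal ((δ / 2) ^ (κ - M)) := by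
    refine (hJ _ (differentiableOn_testFun M ha1) hmem).trans ?_
    rw [mul_assoc]
    refine mul_le_mul_right ((h a ha1).trans (mul_le_mul_right (ENNReal.ofReal_le_ofReal ?_) _)) _
    exact Real.rpow_le_rpow_of_nonpos (by positivity)
      (by rw [hδdef]; nlinarith [norm_nonneg a]) (by linarith)
  set ε : ℝ≥0∞ := ENNReal.ofReal ((2 * δ) ^ (-(M : ℝ))) with hε
  have hq' : (ENNReal.ofReal q).toReal = q := ENNReal.toReal_ofReal hq.le
  have hmarkov := mul_meas_ge_le_pow_eLpNorm' μ (p := ENNReal.ofReal q) (by simpa using hq)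
    ENNReal.ofReal_ne_top (measurable_testFun M a).aestronglyMeasurable ε
  rw [hq'] at hmarkov
  have hsub : {w ∈ ball (0 : En n) 1 | a ∈ anisoBall w} ⊆ {w | ε ≤ ‖testFun M a w‖ₑ} := by
    rintro w ⟨hw, haw⟩
    change ε ≤ ‖testFun M a w‖ₑ
    rw [enorm_testFun, hε]
    apply ENNReal.ofReal_le_ofReal
    have h1 := norm_one_sub_inner_le hw haw
    have h2 := (anisoBall_bounds haw).1
    have h3 : ‖1 - (inner ℂ a w : ℂ)‖ = ‖1 - (inner ℂ w a : ℂ)‖ := by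
      rw [← inner_conj_symm, ← RCLike.norm_conj (1 - (inner ℂ w a : ℂ))]
      simp
    refine Real.rpow_le_rpow_of_nonpos ?_ ?_ (by simp)
    · have := one_sub_norm_le_norm_one_sub_inner (a := a) (mem_ball_zero_iff.1 hw).le
      linarith
    · rw [h3]
      linarith
  have hone : ENNReal.ofReal ((2 * δ) ^ (M : ℝ)) ^ q * ε ^ q = 1 := by
    rw [← ENNReal.mul_rpow_of_nonneg _ _ hq.le, hε, ← ENNReal.ofReal_mul (by positivity),
      ← Real.rpow_add (by positivity)]
    simp
  calc μ {w ∈ ball (0 : En n) 1 | a ∈ anisoBall w}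
      ≤ μ {w | ε ≤ ‖testFun M a w‖ₑ} := measure_mono hsub
    _ = ENNReal.ofReal ((2 * δ) ^ (M : ℝ)) ^ q * (ε ^ q * μ {w | ε ≤ ‖testFun M a w‖ₑ}) := by
        rw [← mul_assoc, hone, one_mul]
    _ ≤ ENNReal.ofReal ((2 * δ) ^ (M : ℝ)) ^ q *
          ((K * C) * ENNReal.ofReal ((δ / 2) ^ (κ - M))) ^ q := by
        gcongr
        exact hmarkov.trans (by gcongr)
    _ = _ := by
        rw [ENNReal.mul_rpow_of_nonneg _ _ hq.le, mul_left_comm, mul_assoc]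
        congr 1
        rw [← ENNReal.mul_rpow_of_nonneg _ _ hq.le, ← ENNReal.ofReal_mul (by positivity),
          ENNReal.ofReal_rpow_of_nonneg (by positivity) hq.le, ← ENNReal.ofReal_mul (by positivity),
          Real.rpow_mul hδ.le, ← Real.mul_rpow (by positivity) (by positivity),
          Real.mul_rpow (by norm_num) hδ.le, div_eq_inv_mul, Real.mul_rpow (by norm_num) hδ.le]
        congr 2
        rw [show δ ^ κ = δ ^ (M : ℝ) * δ ^ (κ - M) by rw [← Real.rpow_add hδ]; ring_nf]
        ring

end Carleson

section HilbertEmbedding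

variable {n : ℕ}

/-- The measure `(1-|z|²)^{n+1+2α}` times Lebesgue measure on the unit ball, for which the
Hilbert space `A^2_{n+1+2α}` contains `A^1_α`. -/
def hilbertMeas (n : ℕ) (α : ℝ) : Measure (En n) :=
  (volume.restrict (ball 0 1)).withDensity
    fun z => ENNReal.ofReal ((1 - ‖z‖ ^ 2) ^ ((n : ℝ) + 1 + 2 * α))

instance (n : ℕ) (α : ℝ) : SFinite (hilbertMeas n α) := by
  unfold hilbertMeas
  infer_instance

lemma measurable_hilbertDensity (n : ℕ) (α : ℝ) : Measurable fun z : En n =>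
    ENNReal.ofReal ((1 - ‖z‖ ^ 2) ^ ((n : ℝ) + 1 + 2 * α)) :=
  (measurable_one_sub_normSq_rpow _).ennreal_ofReal

lemma hilbertMeas_compl_ball (n : ℕ) (α : ℝ) : hilbertMeas n α (ball 0 1)ᶜ = 0 :=
  withDensity_absolutelyContinuous _ _ (by rw [Measure.restrict_apply' measurableSet_ball]; simp)

lemma setLIntegral_hilbertMeas (n : ℕ) (α : ℝ) {s : Set (En n)} (hs : MeasurableSet s)
    (hsb : s ⊆ ball 0 1) (F : En n → ℝ≥0∞) :
    ∫⁻ z in s, F z ∂hilbertMeas n α =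
      ∫⁻ z in s, ENNReal.ofReal ((1 - ‖z‖ ^ 2) ^ ((n : ℝ) + 1 + 2 * α)) * F z := by
  rw [hilbertMeas, restrict_withDensity hs, Measure.restrict_restrict hs,
    Set.inter_eq_self_of_subset_left hsb,
    lintegral_withDensity_eq_lintegral_mul_non_measurable _
    (measurable_hilbertDensity n α) (ae_of_all _ fun _ => ENNReal.ofReal_lt_top)]
  rfl

lemma isOpen_anisoBall_graph :
    IsOpen {p : En n × En n | p.1 ∈ ball (0 : En n) 1 ∧ p.2 ∈ anisoBall p.1} := by
  refine (isOpen_ball.preimage continuous_fst).inter ?_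
  have h1 : IsOpen {p : En n × En n | ‖(inner ℂ p.1 (p.2 - p.1) : ℂ)‖ < 1 / 8 * (1 - ‖p.1‖ ^ 2)} :=
    isOpen_lt (by fun_prop) (by fun_prop)
  have h2 : IsOpen {p : En n × En n | ‖p.2 - p.1‖ ^ 2 < 1 / 8 * (1 - ‖p.1‖ ^ 2)} :=
    isOpen_lt (by fun_prop) (by fun_prop)
  exact h1.inter h2

/-- Sub-mean value property for `|f|²` on anisotropic balls. -/
lemma enorm_sq_mul_volume_le {w : En n} (hw : w ∈ ball (0 : En n) 1) {f : En n → ℂ}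
    (hf : DifferentiableOn ℂ f (ball 0 1)) :
    volume (anisoBall w) * ‖f w‖ₑ ^ 2 ≤ ∫⁻ z in anisoBall w, ‖f z‖ₑ ^ 2 := by
  have h := setIntegral_anisoBall hw (hf.pow 2)
  have h2 := enorm_integral_le_lintegral_enorm (μ := volume.restrict (anisoBall w)) (f ^ 2)
  rw [h] at h2
  simp only [Pi.pow_apply, enorm_mul, enorm_pow] at h2
  convert h2 using 2
  rw [← ofReal_norm, Complex.norm_of_nonneg ENNReal.toReal_nonneg,
    ENNReal.ofReal_toReal (volume_anisoBall_lt_top hw).ne]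

lemma exists_enorm_sq_le (n : ℕ) {α : ℝ} (hn : 1 ≤ n) (hα : -1 < α) :
    ∃ C : ℝ≥0∞, C ≠ ∞ ∧ ∀ w ∈ ball (0 : En n) 1, ∀ f : En n → ℂ,
      DifferentiableOn ℂ f (ball 0 1) →
      ‖f w‖ₑ ^ 2 ≤ C * ENNReal.ofReal ((1 - ‖w‖ ^ 2) ^ (-(2 * ((n : ℝ) + 1 + α)))) *
        ∫⁻ z in anisoBall w, ‖f z‖ₑ ^ 2 ∂hilbertMeas n α := by
  have hn' : (1 : ℝ) ≤ n := by exact_mod_cast hn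
  set β : ℝ := (n : ℝ) + 1 + 2 * α with hβ
  have hV : volume (ball (0 : En n) (1 / 8 / 4)) ≠ 0 := (measure_ball_pos _ _ (by norm_num)).ne'
  have hV' : volume (ball (0 : En n) (1 / 8 / 4)) ≠ ∞ := measure_ball_lt_top.ne
  set V := volume (ball (0 : En n) (1 / 8 / 4)) with hVdef
  refine ⟨V⁻¹ * ENNReal.ofReal ((8 / 5) ^ β), by finiteness, fun w hw f hf => ?_⟩
  have hδ := one_sub_normSq_pos hw
  set δ := 1 - ‖w‖ ^ 2 with hδdef
  have h1 := enorm_sq_mul_volume_le hw hf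
  have h2 := le_volume_aniso (c := 1 / 8) (by norm_num) (by norm_num) hw
  rw [← volume_anisoBall, ← hVdef, ← hδdef] at h2
  have hsub : anisoBall w ⊆ ball 0 1 := fun z hz => mem_ball_of_mem_anisoBall hw hz
  have h3 : ENNReal.ofReal (δ ^ β) * ∫⁻ z in anisoBall w, ‖f z‖ₑ ^ 2 ≤
      ENNReal.ofReal ((8 / 5) ^ β) * ∫⁻ z in anisoBall w, ‖f z‖ₑ ^ 2 ∂hilbertMeas n α := by
    rw [setLIntegral_hilbertMeas n α (isOpen_anisoBall w).measurableSet hsub,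
      ← lintegral_const_mul' _ _ ENNReal.ofReal_ne_top,
      ← lintegral_const_mul' _ _ ENNReal.ofReal_ne_top]
    refine setLIntegral_mono' (isOpen_anisoBall w).measurableSet fun z hz => ?_
    have hz0 := one_sub_normSq_pos (hsub hz)
    have hzb := (anisoBall_bounds hz).1
    rw [← mul_assoc, ← ENNReal.ofReal_mul (by positivity),
      ← Real.mul_rpow (by norm_num) hz0.le]
    gcongr
    · linarith
    · linarith
  have h4 : ENNReal.ofReal (δ ^ (n + 1)) * V * ‖f w‖ₑ ^ 2 ≤
      ∫⁻ z in anisoBall w, ‖f z‖ₑ ^ 2 := le_trans (by gcongr) h1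
  have h5 : ENNReal.ofReal (δ ^ (-(2 * ((n : ℝ) + 1 + α)))) * ENNReal.ofReal (δ ^ β) *
      ENNReal.ofReal (δ ^ (n + 1)) = 1 := by
    rw [← ENNReal.ofReal_mul (by positivity), ← ENNReal.ofReal_mul (by positivity),
      ← Real.rpow_natCast δ (n + 1), ← Real.rpow_add hδ, ← Real.rpow_add hδ, hβ]
    push_cast
    ring_nf
    simp
  calc ‖f w‖ₑ ^ 2
      = V⁻¹ * (ENNReal.ofReal (δ ^ (-(2 * ((n : ℝ) + 1 + α)))) * (ENNReal.ofReal (δ ^ β) *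
          (ENNReal.ofReal (δ ^ (n + 1)) * V * ‖f w‖ₑ ^ 2))) := by
        rw [show ∀ a b c d e v : ℝ≥0∞, v * (a * (b * (c * d * e))) = (a * b * c) * (v * d) * e by
          intros; ring, h5, ENNReal.inv_mul_cancel hV hV', one_mul, one_mul]
    _ ≤ V⁻¹ * (ENNReal.ofReal (δ ^ (-(2 * ((n : ℝ) + 1 + α)))) *
          (ENNReal.ofReal ((8 / 5) ^ β) *
            ∫⁻ z in anisoBall w, ‖f z‖ₑ ^ 2 ∂hilbertMeas n α)) := by
        exact mul_le_mul_right (mul_le_mul_right ((mul_le_mul_right h4 _).trans h3) _) _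
    _ = _ := by ring

end HilbertEmbedding

section HilbertEmbedding

variable {n : ℕ}

lemma aemeasurable_hilbertMeas {α : ℝ} {f : En n → ℂ} (hf : ContinuousOn f (ball 0 1)) :
    AEMeasurable f (hilbertMeas n α) :=
  (hf.aemeasurable measurableSet_ball).mono_ac (withDensity_absolutelyContinuous _ _)

/-- Boundedness on `A^1_α` forces the measure to be finite. -/
lemma isFiniteMeasure_of_embedding (hn : 1 ≤ n) {q α : ℝ} (hα : -1 < α) (hq : 0 < q)
    {μ : Measure (En n)} {K : ℝ≥0∞} (hK : K ≠ ∞)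
    (hJ : ∀ g : En n → ℂ, DifferentiableOn ℂ g (ball 0 1) → MemLp g 1 (wMeas n α) →
      eLpNorm g (ENNReal.ofReal q) μ ≤ K * eLpNorm g 1 (wMeas n α)) :
    IsFiniteMeasure μ := by
  obtain ⟨M, hM⟩ := exists_nat_gt ((n : ℝ) + 1 + α)
  obtain ⟨C, hC, h⟩ := exists_eLpNorm_testFun_le hn hα hM
  have h0 := h 0 (by simp)
  have hone : testFun M (0 : En n) = fun _ => 1 := by
    funext w
    simp [testFun]
  rw [hone] at h0
  have hfin : eLpNorm (fun _ : En n => (1 : ℂ)) 1 (wMeas n α) < ∞ :=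
    h0.trans_lt (by finiteness)
  have h1 := (hJ _ (differentiableOn_const 1) ⟨aestronglyMeasurable_const, hfin⟩).trans_lt
    (ENNReal.mul_lt_top hK.lt_top hfin)
  have h2 : MemLp (fun _ : En n => (1 : ℂ)) (ENNReal.ofReal q) μ :=
    ⟨aestronglyMeasurable_const, h1⟩
  rw [memLp_const_iff (by simpa using hq) ENNReal.ofReal_ne_top] at h2
  exact ⟨h2.resolve_left one_ne_zero⟩

/-- An embedding bounded on `A^1_α` is bounded on `A^2_{n+1+2α}`. -/
lemma exists_eLpNorm_le_hilbert (hn : 1 ≤ n) {q α : ℝ} (hα : -1 < α) (hq : 2 ≤ q)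
    {μ : Measure (En n)} (hμ : μ (ball 0 1)ᶜ = 0) {K : ℝ≥0∞} (hK : K ≠ ∞)
    (hJ : ∀ g : En n → ℂ, DifferentiableOn ℂ g (ball 0 1) → MemLp g 1 (wMeas n α) →
      eLpNorm g (ENNReal.ofReal q) μ ≤ K * eLpNorm g 1 (wMeas n α)) :
    ∃ C : ℝ≥0∞, C ≠ ∞ ∧ ∀ f : En n → ℂ, DifferentiableOn ℂ f (ball 0 1) →
      eLpNorm f (ENNReal.ofReal q) μ ≤ C * eLpNorm f 2 (hilbertMeas n α) := by
  have hq0 : 0 < q := by linarith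
  have hfin := isFiniteMeasure_of_embedding hn hα hq0 hK hJ
  obtain ⟨C₁, hC₁, h₁⟩ := exists_carleson_bound hn hα hq0 hK hJ
  obtain ⟨C₂, hC₂, h₂⟩ := exists_enorm_sq_le n hn hα
  set κ : ℝ := (n : ℝ) + 1 + α with hκ
  have hκ0 : 0 < κ := by
    have : (1 : ℝ) ≤ n := by exact_mod_cast hn
    linarith
  set s : ℝ := q / 2 - 1 with hs
  have hs0 : 0 ≤ s := by linarith
  refine ⟨(C₂ ^ (s + 1) * (ENNReal.ofReal ((4 / 5) ^ (-(κ * q))) * C₁)) ^ (1 / q),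
    by finiteness, fun f hf => ?_⟩
  set A := ∫⁻ z, ‖f z‖ₑ ^ 2 ∂hilbertMeas n α with hA
  have hfν : AEMeasurable f (hilbertMeas n α) := aemeasurable_hilbertMeas hf.continuousOn
  set G : Set (En n × En n) := {p | p.1 ∈ ball (0 : En n) 1 ∧ p.2 ∈ anisoBall p.1} with hG
  have hGm : MeasurableSet G := isOpen_anisoBall_graph.measurableSet
  set wt : En n → ℝ≥0∞ := fun w => ENNReal.ofReal ((1 - ‖w‖ ^ 2) ^ (-(κ * q))) with hwt
  have hwtm : Measurable wt := (measurable_one_sub_normSq_rpow _).ennreal_ofReal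
  set F : En n → En n → ℝ≥0∞ := fun w z =>
    G.indicator (fun p => wt p.1 * ‖f p.2‖ₑ ^ 2) (w, z) with hF
  have hFpos : ∀ {w z}, w ∈ ball (0 : En n) 1 → z ∈ anisoBall w → F w z = wt w * ‖f z‖ₑ ^ 2 :=
    fun {w z} hw hz => Set.indicator_of_mem (show (w, z) ∈ G from ⟨hw, hz⟩) _
  have hFneg : ∀ {w z}, ¬ (w ∈ ball (0 : En n) 1 ∧ z ∈ anisoBall w) → F w z = 0 :=
    fun {w z} h => Set.indicator_of_notMem (show (w, z) ∉ G from h) _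
  have hFm : AEMeasurable (Function.uncurry F) (μ.prod (hilbertMeas n α)) := by
    have : AEMeasurable (fun p : En n × En n => wt p.1 * ‖f p.2‖ₑ ^ 2)
        (μ.prod (hilbertMeas n α)) :=
      (hwtm.comp measurable_fst).aemeasurable.mul
        ((hfν.enorm.pow_const 2).comp_snd)
    exact this.indicator hGm
  have hTm : ∀ z, MeasurableSet {w ∈ ball (0 : En n) 1 | z ∈ anisoBall w} :=
    fun z => measurable_prodMk_right (y := z) hGm
  clear_value F
  have hpoint : ∀ w ∈ ball (0 : En n) 1,
      ‖f w‖ₑ ^ q ≤ C₂ ^ (s + 1) * A ^ s * ∫⁻ z, F w z ∂hilbertMeas n α := by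
    intro w hw
    have hδ := one_sub_normSq_pos hw
    have hb := h₂ w hw f hf
    set I := ∫⁻ z in anisoBall w, ‖f z‖ₑ ^ 2 ∂hilbertMeas n α with hI
    have hIA : I ≤ A := setLIntegral_le_lintegral _ _
    have hFI : ∫⁻ z, F w z ∂hilbertMeas n α = wt w * I := by
      rw [hI, ← lintegral_const_mul' _ _ ENNReal.ofReal_ne_top,
        ← lintegral_indicator (isOpen_anisoBall w).measurableSet]
      refine lintegral_congr fun z => ?_
      by_cases hz : z ∈ anisoBall w
      · rw [Set.indicator_of_mem hz, hFpos hw hz]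
      · rw [Set.indicator_of_notMem hz, hFneg fun h => hz h.2]
    set d := ENNReal.ofReal ((1 - ‖w‖ ^ 2) ^ (-(2 * κ))) with hd
    have hdw : d ^ (s + 1) = wt w := by
      rw [hd, ENNReal.ofReal_rpow_of_nonneg (by positivity) (by linarith),
        ← Real.rpow_mul hδ.le, hwt, hs]
      ring_nf
    calc ‖f w‖ₑ ^ q = (‖f w‖ₑ ^ 2) ^ (s + 1) := by
          rw [← ENNReal.rpow_natCast, ← ENNReal.rpow_mul, hs]
          congr 1
          push_cast
          ring
      _ = (‖f w‖ₑ ^ 2) ^ s * ‖f w‖ₑ ^ 2 := by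
          rw [ENNReal.rpow_add_of_nonneg _ _ hs0 zero_le_one, ENNReal.rpow_one]
      _ ≤ (C₂ * d * A) ^ s * (C₂ * d * I) := by
          gcongr
          exact hb.trans (by gcongr)
      _ = C₂ ^ (s + 1) * A ^ s * (d ^ (s + 1) * I) := by
          rw [ENNReal.mul_rpow_of_nonneg _ _ hs0, ENNReal.mul_rpow_of_nonneg _ _ hs0,
            ENNReal.rpow_add_of_nonneg _ _ hs0 zero_le_one,
            ENNReal.rpow_add_of_nonneg _ _ hs0 zero_le_one, ENNReal.rpow_one, ENNReal.rpow_one]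
          ring
      _ = _ := by rw [hdw, hFI]
  have hinner : ∀ z, ∫⁻ w, F w z ∂μ ≤
      ENNReal.ofReal ((4 / 5) ^ (-(κ * q))) * C₁ * ‖f z‖ₑ ^ 2 := by
    intro z
    by_cases hz : z ∈ ball (0 : En n) 1
    swap
    · have : ∀ w, F w z = 0 := fun w =>
        hFneg fun h => hz (mem_ball_of_mem_anisoBall h.1 h.2)
      simp [this]
    have hδ := one_sub_normSq_pos hz
    have hTz := hTm z
    have hcar := h₁ z hz
    set T : Set (En n) := {w ∈ ball (0 : En n) 1 | z ∈ anisoBall w} with hT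
    calc ∫⁻ w, F w z ∂μ = ∫⁻ w in T, wt w * ‖f z‖ₑ ^ 2 ∂μ := by
          rw [← lintegral_indicator hTz]
          refine lintegral_congr fun w => ?_
          by_cases hw : w ∈ T
          · rw [Set.indicator_of_mem hw, hFpos hw.1 hw.2]
          · rw [Set.indicator_of_notMem hw, hFneg hw]
      _ ≤ ∫⁻ w in T, ENNReal.ofReal ((4 / 5) ^ (-(κ * q))) * wt z * ‖f z‖ₑ ^ 2 ∂μ := by
          refine setLIntegral_mono' hTz fun w hw => ?_
          have hb := (anisoBall_bounds hw.2).2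
          rw [hwt]
          dsimp only
          rw [← ENNReal.ofReal_mul (by positivity), ← Real.mul_rpow (by norm_num) hδ.le]
          refine mul_le_mul_left (ENNReal.ofReal_le_ofReal ?_) _
          refine Real.rpow_le_rpow_of_nonpos (by positivity) (by linarith) ?_
          have : 0 < κ * q := by positivity
          linarith
      _ = ENNReal.ofReal ((4 / 5) ^ (-(κ * q))) * wt z * ‖f z‖ₑ ^ 2 * μ T := by
          rw [setLIntegral_const]
      _ ≤ ENNReal.ofReal ((4 / 5) ^ (-(κ * q))) * wt z * ‖f z‖ₑ ^ 2 *
            (C₁ * ENNReal.ofReal ((1 - ‖z‖ ^ 2) ^ (κ * q))) :=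
          mul_le_mul_right hcar _
      _ = _ := by
          have : wt z * ENNReal.ofReal ((1 - ‖z‖ ^ 2) ^ (κ * q)) = 1 := by
            rw [hwt]
            dsimp only
            rw [← ENNReal.ofReal_mul (by positivity), ← Real.rpow_add hδ]
            simp
          rw [show ∀ a b c d e : ℝ≥0∞, a * b * c * (d * e) = a * d * c * (b * e) by
            intros; ring, this, mul_one]
  have hmain : ∫⁻ w, ‖f w‖ₑ ^ q ∂μ ≤
      C₂ ^ (s + 1) * (ENNReal.ofReal ((4 / 5) ^ (-(κ * q))) * C₁) * A ^ (q / 2) := by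
    calc ∫⁻ w, ‖f w‖ₑ ^ q ∂μ
        ≤ ∫⁻ w, C₂ ^ (s + 1) * A ^ s * ∫⁻ z, F w z ∂hilbertMeas n α ∂μ :=
          lintegral_mono_ae (mem_of_superset (mem_ae_iff.2 hμ) hpoint)
      _ = C₂ ^ (s + 1) * A ^ s * ∫⁻ z, ∫⁻ w, F w z ∂μ ∂hilbertMeas n α := by
          rw [lintegral_const_mul'' _ (show AEMeasurable (fun w => ∫⁻ z, F w z ∂hilbertMeas n α) μ
              from hFm.lintegral_prod_right'),
            lintegral_lintegral_swap hFm]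
      _ ≤ C₂ ^ (s + 1) * A ^ s *
            ∫⁻ z, ENNReal.ofReal ((4 / 5) ^ (-(κ * q))) * C₁ * ‖f z‖ₑ ^ 2 ∂hilbertMeas n α := by
          gcongr with z
          exact hinner z
      _ = _ := by
          rw [lintegral_const_mul' _ _ (by finiteness), ← hA,
            show q / 2 = s + 1 by rw [hs]; ring,
            ENNReal.rpow_add_of_nonneg (x := A) _ _ hs0 zero_le_one, ENNReal.rpow_one]
          ring
  rw [eLpNorm_two_sq, ← hA, eLpNorm_eq_lintegral_rpow_enorm_toReal (by simpa using hq0)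
    ENNReal.ofReal_ne_top, ENNReal.toReal_ofReal hq0.le]
  calc (∫⁻ w, ‖f w‖ₑ ^ q ∂μ) ^ (1 / q)
      ≤ (C₂ ^ (s + 1) * (ENNReal.ofReal ((4 / 5) ^ (-(κ * q))) * C₁) * A ^ (q / 2)) ^ (1 / q) :=
        ENNReal.rpow_le_rpow hmain (by positivity)
    _ = _ := by
        rw [ENNReal.mul_rpow_of_nonneg _ (A ^ (q / 2)) (by positivity), ← ENNReal.rpow_mul]
        congr 2
        field_simp

end HilbertEmbedding

section MeanKernel

variable {n : ℕ}

/-- The graph of the family of anisotropic balls over the unit ball. -/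
def anisoGraph (n : ℕ) : Set (En n × En n) :=
  {p | p.1 ∈ ball (0 : En n) 1 ∧ p.2 ∈ anisoBall p.1}

lemma measurableSet_anisoGraph (n : ℕ) : MeasurableSet (anisoGraph n) :=
  isOpen_anisoBall_graph.measurableSet

/-- The kernel which reproduces holomorphic functions from `L^1(dv_α)` by averaging over
anisotropic balls. -/
def meanKernel (n : ℕ) (α : ℝ) (z w : En n) : ℂ :=
  (anisoGraph n).indicator (fun p => (((volume (Prod.mk p.1 ⁻¹' anisoGraph n)).toReal⁻¹ *
    (wConst n α * (1 - ‖p.2‖ ^ 2) ^ α)⁻¹ : ℝ) : ℂ)) (w, z)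

lemma measurable_meanKernel (n : ℕ) (α : ℝ) :
    Measurable (Function.uncurry (meanKernel n α)) := by
  have h1 : Measurable fun w : En n => (volume (Prod.mk w ⁻¹' anisoGraph n)).toReal⁻¹ :=
    (measurable_measure_prodMk_left (measurableSet_anisoGraph n)).ennreal_toReal.inv
  have h2 : Measurable fun z : En n => (wConst n α * (1 - ‖z‖ ^ 2) ^ α)⁻¹ :=
    ((measurable_one_sub_normSq_rpow α).const_mul _).inv
  have h3 : Measurable ((anisoGraph n).indicator fun p : En n × En n =>
      (((volume (Prod.mk p.1 ⁻¹' anisoGraph n)).toReal⁻¹ *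
        (wConst n α * (1 - ‖p.2‖ ^ 2) ^ α)⁻¹ : ℝ) : ℂ)) :=
    (measurable_ofReal.comp ((h1.comp measurable_fst).mul (h2.comp measurable_snd))).indicator
      (measurableSet_anisoGraph n)
  exact h3.comp measurable_swap

lemma meanKernel_of_mem (α : ℝ) {z w : En n} (hw : w ∈ ball (0 : En n) 1)
    (hz : z ∈ anisoBall w) :
    meanKernel n α z w = (((volume (anisoBall w)).toReal⁻¹ *
      (wConst n α * (1 - ‖z‖ ^ 2) ^ α)⁻¹ : ℝ) : ℂ) := by
  have h : Prod.mk w ⁻¹' anisoGraph n = anisoBall w := by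
    ext y
    exact and_iff_right hw
  rw [meanKernel, Set.indicator_of_mem (show (w, z) ∈ anisoGraph n from ⟨hw, hz⟩), h]

lemma meanKernel_of_notMem (α : ℝ) {z w : En n}
    (h : ¬ (w ∈ ball (0 : En n) 1 ∧ z ∈ anisoBall w)) : meanKernel n α z w = 0 :=
  Set.indicator_of_notMem (show (w, z) ∉ anisoGraph n from h) _

/-- The averaging kernel reproduces holomorphic functions. -/
lemma integral_mul_meanKernel {α : ℝ} (hα : -1 < α) {f : En n → ℂ}
    (hf : DifferentiableOn ℂ f (ball 0 1)) {w : En n} (hw : w ∈ ball (0 : En n) 1) :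
    ∫ z, f z * meanKernel n α z w ∂wMeas n α = f w := by
  have hc := wConst_pos n hα
  have hsub : anisoBall w ⊆ ball 0 1 := fun z hz => mem_ball_of_mem_anisoBall hw hz
  have hm := (isOpen_anisoBall w).measurableSet
  have hV : 0 < (volume (anisoBall w)).toReal := by
    refine ENNReal.toReal_pos ?_ (volume_anisoBall_lt_top hw).ne
    rw [volume_anisoBall]
    refine (lt_of_lt_of_le ?_ (le_volume_aniso (by norm_num) (by norm_num) hw)).ne'
    have := one_sub_normSq_pos hw
    exact ENNReal.mul_pos (by simpa using by positivity)
      (measure_ball_pos _ _ (by norm_num)).ne'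
  rw [wMeas_eq, integral_withDensity_eq_integral_toReal_smul
    ((measurable_one_sub_normSq_rpow α).const_mul _).ennreal_ofReal
    (ae_of_all _ fun _ => ENNReal.ofReal_lt_top)]
  have h1 : ∀ z ∈ ball (0 : En n) 1,
      (ENNReal.ofReal (wConst n α * (1 - ‖z‖ ^ 2) ^ α)).toReal • (f z * meanKernel n α z w) =
        (anisoBall w).indicator (fun z => ((volume (anisoBall w)).toReal : ℂ)⁻¹ * f z) z := by
    intro z hz
    by_cases hzw : z ∈ anisoBall w
    · have h0 := one_sub_normSq_pos hz
      have hp : 0 < wConst n α * (1 - ‖z‖ ^ 2) ^ α := mul_pos hc (Real.rpow_pos_of_pos h0 _)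
      rw [Set.indicator_of_mem hzw, meanKernel_of_mem α hw hzw, ENNReal.toReal_ofReal hp.le,
        Complex.real_smul]
      generalize wConst n α * (1 - ‖z‖ ^ 2) ^ α = t at hp
      have ht : (t : ℂ) ≠ 0 := by exact_mod_cast hp.ne'
      push_cast
      field_simp
    · rw [Set.indicator_of_notMem hzw, meanKernel_of_notMem α fun h => hzw h.2]
      simp
  rw [setIntegral_congr_fun measurableSet_ball h1, setIntegral_indicator hm,
    Set.inter_eq_self_of_subset_right hsub, integral_const_mul, setIntegral_anisoBall hw hf]
  have : ((volume (anisoBall w)).toReal : ℂ) ≠ 0 := by exact_mod_cast hV.ne'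
  field_simp

lemma exists_norm_meanKernel_le (n : ℕ) {α : ℝ} (hα : -1 < α) :
    ∃ D : ℝ, 0 < D ∧ ∀ z w : En n, w ∈ ball (0 : En n) 1 → z ∈ anisoBall w →
      ‖meanKernel n α z w‖ ≤ D * (1 - ‖z‖ ^ 2) ^ (-((n : ℝ) + 1 + α)) := by
  have hc := wConst_pos n hα
  have hv : 0 < (volume (ball (0 : En n) (1 / 8 / 4))).toReal :=
    ENNReal.toReal_pos (measure_ball_pos _ _ (by norm_num)).ne' measure_ball_lt_top.ne
  set v := (volume (ball (0 : En n) (1 / 8 / 4))).toReal with hvdef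
  refine ⟨((4 / 5) ^ (n + 1) * v)⁻¹ * (wConst n α)⁻¹, by positivity, fun z w hw hz => ?_⟩
  have hz0 := one_sub_normSq_pos (mem_ball_of_mem_anisoBall hw hz)
  have hw0 := one_sub_normSq_pos hw
  have hb := (anisoBall_bounds hz).2
  have hvol : (4 / 5 * (1 - ‖z‖ ^ 2)) ^ (n + 1) * v ≤ (volume (anisoBall w)).toReal := by
    have h := le_volume_aniso (c := 1 / 8) (by norm_num) (by norm_num) hw
    rw [← volume_anisoBall] at h
    have h' := ENNReal.toReal_mono (volume_anisoBall_lt_top hw).ne h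
    rw [ENNReal.toReal_mul, ENNReal.toReal_ofReal (by positivity)] at h'
    refine le_trans ?_ h'
    gcongr
    linarith
  rw [meanKernel_of_mem α hw hz, Complex.norm_of_nonneg (by positivity), Real.rpow_neg hz0.le,
    Real.rpow_add hz0, mul_inv, ← mul_assoc]
  have h1 : (1 - ‖z‖ ^ 2) ^ ((n : ℝ) + 1) = (1 - ‖z‖ ^ 2) ^ (n + 1) := by
    exact_mod_cast Real.rpow_natCast _ (n + 1)
  calc (volume (anisoBall w)).toReal⁻¹ * (wConst n α)⁻¹ * ((1 - ‖z‖ ^ 2) ^ α)⁻¹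
      ≤ ((4 / 5 * (1 - ‖z‖ ^ 2)) ^ (n + 1) * v)⁻¹ * (wConst n α)⁻¹ *
          ((1 - ‖z‖ ^ 2) ^ α)⁻¹ := by gcongr
    _ = _ := by
        rw [h1, mul_pow]
        simp only [mul_inv]
        ring

/-- The averaging kernel is bounded as a map into `L^2`. -/
lemma exists_lintegral_meanKernel_le (n : ℕ) {α : ℝ} (hn : 1 ≤ n) (hα : -1 < α) :
    ∃ B : ℝ, 0 < B ∧ ∀ z : En n,
      ∫⁻ w, ‖meanKernel n α z w‖ₑ ^ 2 ∂hilbertMeas n α ≤ ENNReal.ofReal (B ^ 2) := by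
  obtain ⟨D, hD, h⟩ := exists_norm_meanKernel_le n hα
  have hn' : (1 : ℝ) ≤ n := by exact_mod_cast hn
  set β : ℝ := (n : ℝ) + 1 + 2 * α with hβ
  have hr : 0 < √(2 / 5 : ℝ) + 2 / 5 := by positivity
  have hv : 0 < (volume (ball (0 : En n) (√(2 / 5) + 2 / 5))).toReal :=
    ENNReal.toReal_pos (measure_ball_pos _ _ hr).ne' measure_ball_lt_top.ne
  set v := (volume (ball (0 : En n) (√(2 / 5) + 2 / 5))).toReal with hvdef
  refine ⟨√((8 / 5) ^ β * D ^ 2 * v), by positivity, fun z => ?_⟩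
  rw [Real.sq_sqrt (by positivity)]
  by_cases hz : z ∈ ball (0 : En n) 1
  swap
  · have : ∀ w, meanKernel n α z w = 0 := fun w =>
      meanKernel_of_notMem α fun h => hz (mem_ball_of_mem_anisoBall h.1 h.2)
    simp [this]
  have hδ := one_sub_normSq_pos hz
  have hvol := volume_aniso_le (c := 2 / 5) (by norm_num) hz
  set δ := 1 - ‖z‖ ^ 2 with hδdef
  set T : Set (En n) := {w | w ∈ ball (0 : En n) 1 ∧ z ∈ anisoBall w} with hT
  have hTm : MeasurableSet T := measurable_prodMk_right (y := z) (measurableSet_anisoGraph n)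
  have hTv : volume T ≤ ENNReal.ofReal (δ ^ (n + 1) * v) := by
    have hsub : T ⊆ (fun w => w + -z) ⁻¹' aniso (2 / 5) z := fun w hw => by
      simpa [sub_eq_add_neg] using sub_mem_aniso_of_mem_anisoBall hw.2
    refine (measure_mono hsub).trans ?_
    rw [measure_preimage_add_right, ENNReal.ofReal_mul (by positivity), hvdef,
      ENNReal.ofReal_toReal measure_ball_lt_top.ne]
    exact hvol
  have hpt : ∀ w ∈ T, ENNReal.ofReal ((1 - ‖w‖ ^ 2) ^ β) * ‖meanKernel n α z w‖ₑ ^ 2 ≤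
      ENNReal.ofReal ((8 / 5 * δ) ^ β * (D * δ ^ (-((n : ℝ) + 1 + α))) ^ 2) := by
    intro w hw
    have hw0 := one_sub_normSq_pos hw.1
    have hb := (anisoBall_bounds hw.2).1
    rw [← ofReal_norm, ← ENNReal.ofReal_pow (norm_nonneg _), ← ENNReal.ofReal_mul (by positivity)]
    apply ENNReal.ofReal_le_ofReal
    have := h z w hw.1 hw.2
    gcongr
    · linarith
    · linarith
  calc ∫⁻ w, ‖meanKernel n α z w‖ₑ ^ 2 ∂hilbertMeas n α
      = ∫⁻ w in T, ‖meanKernel n α z w‖ₑ ^ 2 ∂hilbertMeas n α := by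
        rw [← lintegral_indicator hTm]
        refine lintegral_congr fun w => ?_
        by_cases hw : w ∈ T
        · rw [Set.indicator_of_mem hw]
        · rw [Set.indicator_of_notMem hw, meanKernel_of_notMem α hw]
          simp
    _ = ∫⁻ w in T, ENNReal.ofReal ((1 - ‖w‖ ^ 2) ^ β) * ‖meanKernel n α z w‖ₑ ^ 2 :=
        setLIntegral_hilbertMeas n α hTm (fun w hw => hw.1) _
    _ ≤ ∫⁻ _ in T, ENNReal.ofReal ((8 / 5 * δ) ^ β * (D * δ ^ (-((n : ℝ) + 1 + α))) ^ 2) :=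
        setLIntegral_mono' hTm hpt
    _ ≤ ENNReal.ofReal ((8 / 5 * δ) ^ β * (D * δ ^ (-((n : ℝ) + 1 + α))) ^ 2) *
          ENNReal.ofReal (δ ^ (n + 1) * v) := by
        rw [setLIntegral_const]
        exact mul_le_mul_right hTv _
    _ = _ := by
        rw [← ENNReal.ofReal_mul (by positivity), Real.mul_rpow (by norm_num) hδ.le, mul_pow,
          ← Real.rpow_natCast (δ ^ (-((n : ℝ) + 1 + α))), ← Real.rpow_mul hδ.le]
        congr 1
        have : δ ^ β * δ ^ (-((n : ℝ) + 1 + α) * ((2 : ℕ) : ℝ)) * δ ^ (n + 1) = 1 := by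
          rw [← Real.rpow_natCast δ (n + 1), ← Real.rpow_add hδ, ← Real.rpow_add hδ, hβ]
          push_cast
          ring_nf
          simp
        linear_combination (8 / 5) ^ β * D ^ 2 * v * this

end MeanKernel

section Summing

variable {X Y : Type*} [NormedAddCommGroup X] [NormedSpace ℂ X]
  [NormedAddCommGroup Y]

lemma norm_apply_le_of_norm_le_one {φ : X →L[ℂ] ℂ} (hφ : ‖φ‖ ≤ 1) (x : X) : ‖φ x‖ ≤ ‖x‖ :=
  (φ.le_of_opNorm_le hφ x).trans_eq (one_mul _)

lemma weakNorm_le {r : ℝ} (hr : 1 ≤ r) {m : ℕ} (x : Fin m → X) {φ : X →L[ℂ] ℂ} (hφ : ‖φ‖ ≤ 1) :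
    (∑ k, ‖φ (x k)‖ ^ r) ^ (1 / r) ≤ (∑ k, ‖x k‖ ^ r) ^ (1 / r) := by
  have hr0 : 0 ≤ r := by linarith
  gcongr with k
  exact norm_apply_le_of_norm_le_one hφ _

/-- An `r`-summing linear map is bounded. -/
lemma norm_le_of_summingBoundWith {r : ℝ} (hr : 1 ≤ r) {T : X → Y} {C : ℝ} (hC : 0 ≤ C)
    (h : SummingBoundWith r r T C) (x : X) : ‖T x‖ ≤ C * ‖x‖ := by
  have hr0 : r ≠ 0 := by linarith
  have hpow : ∀ t : ℝ, 0 ≤ t → (t ^ r) ^ (1 / r) = t := fun t ht => by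
    rw [one_div, Real.rpow_rpow_inv ht hr0]
  have h1 := h 1 fun _ => x
  simp only [Finset.univ_unique, Finset.sum_const, Finset.card_singleton, one_smul] at h1
  rw [hpow _ (norm_nonneg _)] at h1
  refine h1.trans (mul_le_mul_of_nonneg_left ?_ hC)
  have : Nonempty {φ : X →L[ℂ] ℂ // ‖φ‖ ≤ 1} := ⟨⟨0, by simp⟩⟩
  refine ciSup_le fun φ => ?_
  rw [hpow _ (norm_nonneg _)]
  exact norm_apply_le_of_norm_le_one φ.2 x

/-- A `1`-summing operator is `r`-summing for every `r ≥ 1`. -/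
lemma isSummingRS_of_sum_norm_le [NormedSpace ℂ Y] {r : ℝ} (hr : 1 ≤ r)
    (T : X →ₗ[ℂ] Y) {C : ℝ} (hC : 0 ≤ C)
    (h : ∀ (m : ℕ) (x : Fin m → X) (S : ℝ),
      (∀ φ : X →L[ℂ] ℂ, ‖φ‖ ≤ 1 → ∑ k, ‖φ (x k)‖ ≤ S) → ∑ k, ‖T (x k)‖ ≤ C * S) :
    IsSummingRS r r T := by
  refine ⟨C, hC, fun m x => ?_⟩
  set W := ⨆ φ : {φ : X →L[ℂ] ℂ // ‖φ‖ ≤ 1}, (∑ k, ‖φ.1 (x k)‖ ^ r) ^ (1 / r) with hW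
  have hbdd : BddAbove (Set.range fun φ : {φ : X →L[ℂ] ℂ // ‖φ‖ ≤ 1} =>
      (∑ k, ‖φ.1 (x k)‖ ^ r) ^ (1 / r)) :=
    ⟨_, by rintro _ ⟨φ, rfl⟩; exact weakNorm_le hr x φ.2⟩
  have hle : ∀ φ : X →L[ℂ] ℂ, ‖φ‖ ≤ 1 → (∑ k, ‖φ (x k)‖ ^ r) ^ (1 / r) ≤ W :=
    fun φ hφ => le_ciSup hbdd ⟨φ, hφ⟩
  have hW0 : 0 ≤ W := Real.iSup_nonneg fun φ => by positivity
  rcases hr.eq_or_lt with rfl | hr1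
  · simp only [Real.rpow_one, div_one] at hle ⊢
    exact h m x W hle
  set N := ∑ k, ‖T (x k)‖ ^ r with hN
  have hN0 : 0 ≤ N := Finset.sum_nonneg fun k _ => by positivity
  have hr0 : 0 < r := by linarith
  have hconj : (r.conjExponent).HolderConjugate r := (Real.HolderConjugate.conjExponent hr1).symm
  have hexp : 1 / r.conjExponent = 1 - 1 / r := by
    have := hconj.inv_add_inv_eq_one
    rw [one_div, one_div]
    linarith
  have key : ∑ k, ‖T (((‖T (x k)‖ ^ (r - 1) : ℝ) : ℂ) • x k)‖ ≤ C * (N ^ (1 - 1 / r) * W) := by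
    refine h m _ _ fun φ hφ => ?_
    calc ∑ k, ‖φ (((‖T (x k)‖ ^ (r - 1) : ℝ) : ℂ) • x k)‖
        = ∑ k, ‖T (x k)‖ ^ (r - 1) * ‖φ (x k)‖ := by
          refine Finset.sum_congr rfl fun k _ => ?_
          rw [map_smul, norm_smul, Complex.norm_of_nonneg (by positivity)]
      _ ≤ (∑ k, (‖T (x k)‖ ^ (r - 1)) ^ r.conjExponent) ^ (1 / r.conjExponent) *
            (∑ k, ‖φ (x k)‖ ^ r) ^ (1 / r) :=
          Real.inner_le_Lp_mul_Lq_of_nonneg _ hconj (fun k _ => by positivity)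
            (fun k _ => by positivity)
      _ = N ^ (1 - 1 / r) * (∑ k, ‖φ (x k)‖ ^ r) ^ (1 / r) := by
          rw [hexp]
          congr 2
          refine Finset.sum_congr rfl fun k _ => ?_
          rw [← Real.rpow_mul (norm_nonneg _), hconj.symm.sub_one_mul_conj]
      _ ≤ N ^ (1 - 1 / r) * W := by
          gcongr
          exact hle φ hφ
  have hsum : ∑ k, ‖T (((‖T (x k)‖ ^ (r - 1) : ℝ) : ℂ) • x k)‖ = N := by
    refine Finset.sum_congr rfl fun k _ => ?_
    rw [map_smul, norm_smul, Complex.norm_of_nonneg (by positivity)]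
    rcases (norm_nonneg (T (x k))).eq_or_lt with h0 | h0
    · rw [← h0, mul_zero, Real.zero_rpow hr0.ne']
    · rw [Real.rpow_sub_one h0.ne']
      field_simp
  rw [hsum] at key
  rcases hN0.eq_or_lt with h0 | h0
  · rw [← h0, Real.zero_rpow (by positivity)]
    positivity
  · have hpos : 0 < N ^ (1 - 1 / r) := Real.rpow_pos_of_pos h0 _
    have hsplit : N = N ^ (1 - 1 / r) * N ^ (1 / r) := by
      rw [← Real.rpow_add h0]
      simp
    nth_rewrite 1 [hsplit] at key
    refine le_of_mul_le_mul_left (key.trans_eq ?_) hpos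
    ring

end Summing

section Functional

variable {Ω : Type*} [MeasurableSpace Ω] {v : Measure Ω}

lemma eLpNorm_ofReal_one (f : Ω → ℂ) : eLpNorm f (ENNReal.ofReal 1) v = eLpNorm f 1 v := by
  rw [ENNReal.ofReal_one]

/-- A bounded measurable function induces a functional of norm at most one on `L^1`. -/
lemma exists_functional_Lp_one {a : Ω → ℂ} (ha : Measurable a) (ha1 : ∀ x, ‖a x‖ ≤ 1) :
    ∃ φ : Lp ℂ (ENNReal.ofReal 1) v →L[ℂ] ℂ, ‖φ‖ ≤ 1 ∧ ∀ f, φ f = ∫ x, f x * a x ∂v := by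
  have hLint : ∀ f : Lp ℂ (ENNReal.ofReal 1) v, Integrable f v := fun f => by
    rw [← memLp_one_iff_integrable, ← ENNReal.ofReal_one]
    exact Lp.memLp f
  have hmul := fun f => integrable_mul_of_norm_le_const (hLint f) ha ha1
  let φ₀ : Lp ℂ (ENNReal.ofReal 1) v →ₗ[ℂ] ℂ :=
    { toFun := fun f => ∫ x, f x * a x ∂v
      map_add' := fun f g => by
        rw [← integral_add (hmul f) (hmul g)]
        refine integral_congr_ae ((Lp.coeFn_add f g).mono fun x hx => ?_)
        dsimp only
        rw [hx, Pi.add_apply, add_mul]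
      map_smul' := fun c f => by
        rw [RingHom.id_apply, smul_eq_mul, ← integral_const_mul]
        refine integral_congr_ae ((Lp.coeFn_smul c f).mono fun x hx => ?_)
        dsimp only
        rw [hx, Pi.smul_apply, smul_eq_mul, mul_assoc] }
  have hφ₀ : ∀ f, ‖φ₀ f‖ ≤ 1 * ‖f‖ := fun f => by
    have h1 : ‖φ₀ f‖ₑ ≤ eLpNorm f (ENNReal.ofReal 1) v := by
      rw [eLpNorm_ofReal_one, eLpNorm_one_eq_lintegral_enorm]
      refine (enorm_integral_le_lintegral_enorm _).trans (lintegral_mono fun x => ?_)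
      rw [enorm_mul]
      refine mul_le_of_le_one_right' ?_
      rw [← ofReal_norm]
      exact ENNReal.ofReal_le_one.2 (ha1 x)
    rw [one_mul, Lp.norm_def, ← toReal_enorm]
    exact ENNReal.toReal_mono (Lp.eLpNorm_ne_top f) h1
  exact ⟨φ₀.mkContinuous 1 hφ₀, φ₀.mkContinuous_norm_le zero_le_one hφ₀, fun f => rfl⟩

end Functional

section Embedding

variable {n : ℕ}

instance (n : ℕ) (α : ℝ) : SFinite (wMeas n α) := by
  rw [wMeas_eq]
  infer_instance

/-- The inclusion of `A^1_α` into `A^2_{n+1+2α}` is `1`-summing. -/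
lemma exists_sum_eLpNorm_hilbert_le (hn : 1 ≤ n) {α : ℝ} (hα : -1 < α) :
    ∃ B : ℝ, 0 ≤ B ∧ ∀ (m : ℕ) (g : Fin m → En n → ℂ),
      (∀ k, DifferentiableOn ℂ (g k) (ball 0 1)) → (∀ k, Integrable (g k) (wMeas n α)) →
      (∀ k, eLpNorm (g k) 2 (hilbertMeas n α) ≠ ∞) ∧ ∀ S : ℝ,
        (∀ a : En n → ℂ, Measurable a → (∀ z, ‖a z‖ ≤ 1) →
          ∑ k, ‖∫ z, g k z * a z ∂wMeas n α‖ ≤ S) →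
        ∑ k, (eLpNorm (g k) 2 (hilbertMeas n α)).toReal ≤ B * S := by
  obtain ⟨B, hB0, hB⟩ := exists_lintegral_meanKernel_le n hn hα
  refine ⟨98 * B, by positivity, fun m g hg hgi => ?_⟩
  have heq : ∀ k, eLpNorm (fun w => ∫ z, g k z * meanKernel n α z w ∂wMeas n α) 2
      (hilbertMeas n α) = eLpNorm (g k) 2 (hilbertMeas n α) := fun k =>
    eLpNorm_congr_ae (mem_of_superset (mem_ae_iff.2 (hilbertMeas_compl_ball n α))
      fun w hw => integral_mul_meanKernel hα (hg k) hw)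
  refine ⟨fun k => ?_, fun S hS => ?_⟩
  · rw [← heq]
    exact (memLp_two_integral_kernel (hgi k) (measurable_meanKernel n α) hB).2.ne
  · simpa only [heq] using sum_eLpNorm_two_kernel_le hgi (measurable_meanKernel n α) hB0 hB hS

lemma eLpNorm_le_of_representsEmbedding {q α : ℝ} [Fact (1 ≤ ENNReal.ofReal q)]
    {μ : Measure (En n)} {J : BergmanSpace n 1 α →L[ℂ] Lp ℂ (ENNReal.ofReal q) μ}
    (hJ : RepresentsEmbedding n 1 q α μ J) {g : En n → ℂ}
    (hg : DifferentiableOn ℂ g (ball 0 1)) (hgm : MemLp g 1 (wMeas n α)) :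
    eLpNorm g (ENNReal.ofReal q) μ ≤ ‖J‖ₑ * eLpNorm g 1 (wMeas n α) := by
  have hgm' : MemLp g (ENNReal.ofReal 1) (wMeas n α) := by rwa [ENNReal.ofReal_one]
  let G : BergmanSpace n 1 α := ⟨hgm'.toLp g, g, hg, hgm'.coeFn_toLp⟩
  have h1 : (J G : En n → ℂ) =ᵐ[μ] g := hJ G g hg hgm'.coeFn_toLp
  have h2 : ‖G‖ₑ = eLpNorm g 1 (wMeas n α) := by
    rw [← eLpNorm_ofReal_one]
    exact Lp.enorm_toLp hgm'
  rw [← eLpNorm_congr_ae h1, ← Lp.enorm_def, ← h2]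
  exact J.le_opENorm G

/-- A bounded Carleson embedding is `1`-summing. -/
lemma exists_sum_norm_embedding_le (hn : 1 ≤ n) {q α : ℝ} (hα : -1 < α) (hq : 2 ≤ q)
    [Fact (1 ≤ ENNReal.ofReal q)] {μ : Measure (En n)} (hμ : μ (ball 0 1)ᶜ = 0)
    {J : BergmanSpace n 1 α →L[ℂ] Lp ℂ (ENNReal.ofReal q) μ}
    (hJ : RepresentsEmbedding n 1 q α μ J) :
    ∃ C : ℝ, 0 ≤ C ∧ ∀ (m : ℕ) (x : Fin m → BergmanSpace n 1 α) (S : ℝ),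
      (∀ φ : BergmanSpace n 1 α →L[ℂ] ℂ, ‖φ‖ ≤ 1 → ∑ k, ‖φ (x k)‖ ≤ S) →
        ∑ k, ‖J (x k)‖ ≤ C * S := by
  obtain ⟨C, hC, h₁⟩ := exists_eLpNorm_le_hilbert hn hα hq hμ (K := ‖J‖ₑ) enorm_ne_top
    fun g hg hgm => eLpNorm_le_of_representsEmbedding hJ hg hgm
  obtain ⟨B, hB, h₂⟩ := exists_sum_eLpNorm_hilbert_le hn hα
  refine ⟨C.toReal * B, by positivity, fun m x S hS => ?_⟩
  choose g hg hxg using fun k => (x k).2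
  have hgi : ∀ k, Integrable (g k) (wMeas n α) := fun k => by
    rw [← memLp_one_iff_integrable, ← ENNReal.ofReal_one]
    exact (memLp_congr_ae (hxg k)).1 (Lp.memLp _)
  obtain ⟨hfin, hsum⟩ := h₂ m g hg hgi
  have hnorm : ∀ k, ‖J (x k)‖ ≤ C.toReal * (eLpNorm (g k) 2 (hilbertMeas n α)).toReal :=
    fun k => by
      rw [Lp.norm_def, eLpNorm_congr_ae (hJ (x k) (g k) (hg k) (hxg k)), ← ENNReal.toReal_mul]
      exact ENNReal.toReal_mono (ENNReal.mul_ne_top hC (hfin k)) (h₁ (g k) (hg k))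
  have hdual : ∀ a : En n → ℂ, Measurable a → (∀ z, ‖a z‖ ≤ 1) →
      ∑ k, ‖∫ z, g k z * a z ∂wMeas n α‖ ≤ S := fun a ha ha1 => by
    obtain ⟨φ, hφ, hφa⟩ := exists_functional_Lp_one (v := wMeas n α) ha ha1
    let ψ : BergmanSpace n 1 α →L[ℂ] ℂ := φ.comp (Submodule.subtypeL _)
    have hψ : ‖ψ‖ ≤ 1 := ContinuousLinearMap.opNorm_le_bound _ zero_le_one fun y =>
      (φ.le_of_opNorm_le hφ (y : Lp ℂ (ENNReal.ofReal 1) (wMeas n α)))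
    refine le_trans (le_of_eq (Finset.sum_congr rfl fun k _ => ?_)) (hS ψ hψ)
    change _ = ‖φ (x k)‖
    rw [hφa]
    congr 1
    exact integral_congr_ae ((hxg k).mono fun z hz => by dsimp only; rw [hz])
  calc ∑ k, ‖J (x k)‖ ≤ ∑ k, C.toReal * (eLpNorm (g k) 2 (hilbertMeas n α)).toReal :=
        Finset.sum_le_sum fun k _ => hnorm k
    _ = C.toReal * ∑ k, (eLpNorm (g k) 2 (hilbertMeas n α)).toReal := by rw [Finset.mul_sum]
    _ ≤ C.toReal * (B * S) := by
        gcongr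
        exact hsum S hdual
    _ = _ := by ring

end Embedding

theorem statement8 (n : ℕ) (hn : 1 ≤ n) (q r α : ℝ)
    (hα : -1 < α) (hq : 2 ≤ q) (hr : 1 ≤ r)
    [Fact (1 ≤ ENNReal.ofReal q)]
    (μ : Measure (En n)) (hμ : μ (unitBall n)ᶜ = 0) :
    (∃ J : BergmanSpace n 1 α →ₗ[ℂ] Lp ℂ (ENNReal.ofReal q) μ,
        RepresentsEmbedding n 1 q α μ ⇑J ∧ IsSummingRS r r ⇑J) ↔
      ∃ J : BergmanSpace n 1 α →L[ℂ] Lp ℂ (ENNReal.ofReal q) μ,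
        RepresentsEmbedding n 1 q α μ ⇑J := by
  constructor
  · rintro ⟨J, hJ, C, hC, hsum⟩
    exact ⟨J.mkContinuous C fun x => norm_le_of_summingBoundWith hr hC hsum x, hJ⟩
  · rintro ⟨J, hJ⟩
    obtain ⟨C, hC, h⟩ := exists_sum_norm_embedding_le hn hα hq hμ hJ
    exact ⟨J.toLinearMap, hJ, isSummingRS_of_sum_norm_le hr J.toLinearMap hC h⟩
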